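/- arXiv:1710.02512 — 3 statements merged into one kernel-verified Lean document; each statement's English description precedes it below -/
import Mathlib

section
/- Let q be an even prime power, let n ≥ 3, and let K be a complete k-cap in PG(n, q). Then for every point Q of PG(n, q) not in K, the number σ₁(Q) of tangent lines of K through Q satisfies σ₁(Q) ≤ t, where t = q^{n−1} + q^{n−2} + ⋯ + q + 2 − k is the number of tangent lines of K through each point of K. -/
open Module

/-- Points of the projective space `PG(n, q)` over the field `F` (with `q = |F|`). -/
abbrev PGPoint (F : Type*) [Field F] (n : ℕ) := Projectivization F (Fin (n + 1) → F)

/-- The set of projective points lying in the projective subspace determined by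
a linear subspace `W`. -/
def ptsIn {F : Type*} [Field F] {n : ℕ} (W : Submodule F (Fin (n + 1) → F)) :
    Set (PGPoint F n) := {P | P.submodule ≤ W}

/-- Three points of `PG(n, q)` are collinear if they lie on a common line. -/
def Coll3 {F : Type*} [Field F] {n : ℕ} (P₁ P₂ P₃ : PGPoint F n) : Prop :=
  Module.finrank F ↥(P₁.submodule ⊔ P₂.submodule ⊔ P₃.submodule) ≤ 2

/-- A cap (a plane arc when `n = 2`): a set of points no three of which are collinear. -/
def IsCap {F : Type*} [Field F] {n : ℕ} (K : Set (PGPoint F n)) : Prop :=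
  ∀ P₁ ∈ K, ∀ P₂ ∈ K, ∀ P₃ ∈ K, P₁ ≠ P₂ → P₁ ≠ P₃ → P₂ ≠ P₃ → ¬ Coll3 P₁ P₂ P₃

/-- A complete cap: a cap that is not contained in a cap with one more point. -/
def IsCompleteCap {F : Type*} [Field F] {n : ℕ} (K : Set (PGPoint F n)) : Prop :=
  IsCap K ∧ ∀ P ∉ K, ¬ IsCap (insert P K)

/-- A tangent line of `K`: a line (2-dimensional linear subspace) meeting `K`
in exactly one point. -/
def IsTangent {F : Type*} [Field F] {n : ℕ} (K : Set (PGPoint F n))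
    (W : Submodule F (Fin (n + 1) → F)) : Prop :=
  Module.finrank F W = 2 ∧ (ptsIn W ∩ K).ncard = 1

/-!
Since `K` is complete, `Q` lies on a bisecant `P₁P₂` of `K`. The planes through this bisecant
partition the remaining points of `K`, so it is enough to show that in each of them the number of
points of `K` and the number of contact points of tangents through `Q` add up to at most `q + 2`.

This is Segre's method for plane arcs. For a point `x` of a `k`-arc the product of the tangents
at `x` is a form of degree `d = q + 2 - k` on the pencil of lines through `x`. By Wilson's theorem
its values at the other points `y` of the arc are, up to a constant, the inverses of the products
of the bisecants `xp` at `y`, so it can be interpolated at `Q` from its values at `d + 1` points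
of the arc. In characteristic two the determinant is symmetric, hence so are the interpolation
terms, and the terms of all ordered pairs from `d + 2` points of the arc sum to zero. If `Q` lay on
the tangents at `d + 1` points `S`, apply this to `S ∪ {P₁}`: the terms at the points of `S`
already sum to zero, hence so do those at `P₁`, and `Q` lies on a tangent at `P₁`. But the line
`P₁Q` is a bisecant.
-/

section Pencil

variable {F V : Type*} [Field F] [AddCommGroup V] [Module F V] {b : LinearMap.BilinForm F V}

/-- Alternating bilinear forms of rank at most two, i.e. wedges `φ ∧ ψ` of two linear functionals,
described by their Plücker relation. Modulo its radical, such a form is the determinant on a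
plane, so `b u v = 0` says that `u` and `v` give the same point of a projective line. -/
structure IsDecomposable (b : LinearMap.BilinForm F V) : Prop where
  isAlt : b.IsAlt
  mul_eq_sub : ∀ u v w z, b u v * b w z = b u w * b v z - b u z * b v w

/-- A finite set of vectors that represent distinct points of the projective line defined by a
decomposable form `b`. -/
def RepresentsDistinct (b : LinearMap.BilinForm F V) (S : Finset V) : Prop :=
  (S : Set V).Pairwise fun u v => b u v ≠ 0

namespace RepresentsDistinct

variable {S T M D : Finset V}

theorem mono (hS : RepresentsDistinct b S) (hTS : T ⊆ S) : RepresentsDistinct b T :=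
  Set.Pairwise.mono (Finset.coe_subset.2 hTS) hS

theorem insert_of_ne_zero [DecidableEq V] (hS : RepresentsDistinct b S) (hb : IsDecomposable b)
    {v : V} (hv : ∀ u ∈ S, b v u ≠ 0) : RepresentsDistinct b (insert v S) := by
  rw [RepresentsDistinct, Finset.coe_insert]
  refine Set.Pairwise.insert hS fun u hu _ => ⟨hv u hu, fun h => hv u hu ?_⟩
  rw [← hb.isAlt.neg_eq, h, neg_zero]

/-- The quotient `b w p / b u p` is the coordinate of `p` on the projective line with respect to
the points `u` and `w`. -/
theorem injOn_div (hS : RepresentsDistinct b S) (hb : IsDecomposable b) {u w : V}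
    (huw : b u w ≠ 0) (hu : ∀ p ∈ S, b u p ≠ 0) : Set.InjOn (fun p => b w p / b u p) S := by
  intro p hp r hr hpr
  by_contra hne
  refine mul_ne_zero huw (hS hp hr hne) ?_
  have hcross := (div_eq_div_iff (hu p hp) (hu r hr)).1 hpr
  rw [hb.mul_eq_sub]
  linear_combination -hcross

theorem sum_prod_mul_prod_inv_eq_zero [DecidableEq V] (hM : RepresentsDistinct b M)
    (hb : IsDecomposable b) (hcard : M.card = D.card + 2) :
    ∑ y ∈ M, (∏ d ∈ D, b d y) * ∏ z ∈ M.erase y, (b y z)⁻¹ = 0 := by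
  induction D using Finset.induction_on generalizing M with
  | empty =>
    obtain ⟨x, y, hxy, rfl⟩ := Finset.card_eq_two.1 (by simpa using hcard)
    have herase : ({x, y} : Finset V).erase y = {x} := by
      rw [Finset.pair_comm, Finset.erase_insert (by simpa using hxy.symm)]
    rw [Finset.sum_pair hxy, Finset.erase_insert (by simpa using hxy), herase]
    simp [← hb.isAlt.neg_eq x y, inv_neg]
  | insert d D hd ih =>
    rw [Finset.card_insert_of_notMem hd] at hcard
    -- Removing `p` from `M` cancels the linear form `b p`.
    have hsum_form : ∀ p ∈ M,
        ∑ y ∈ M, (∏ i ∈ D, b i y) * (b p y * ∏ z ∈ M.erase y, (b y z)⁻¹) = 0 := by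
      intro p hp
      have hp_card : (M.erase p).card = D.card + 2 := by
        rw [Finset.card_erase_of_mem hp]; omega
      rw [← Finset.sum_erase_add _ _ hp, hb.isAlt.self_eq_zero, zero_mul, mul_zero, add_zero,
        ← neg_eq_zero, ← ih (hM.mono (Finset.erase_subset p M)) hp_card, ← Finset.sum_neg_distrib]
      refine Finset.sum_congr rfl fun y hy => ?_
      obtain ⟨hyp, hyM⟩ := Finset.mem_erase.1 hy
      have hpy : b p y * (b y p)⁻¹ = -1 := by
        rw [← hb.isAlt.neg_eq y p, neg_mul, mul_inv_cancel₀ (hM hyM hp hyp)]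
      rw [← Finset.mul_prod_erase _ _ (Finset.mem_erase.2 ⟨hyp.symm, hp⟩),
        Finset.erase_right_comm (a := y)]
      linear_combination -(∏ i ∈ D, b i y) * (∏ z ∈ (M.erase p).erase y, (b y z)⁻¹) * hpy
    obtain ⟨p, hp, r, hr, hpr⟩ := Finset.one_lt_card.1 (show 1 < M.card by omega)
    refine (mul_eq_zero.1 ?_).resolve_left (hM hp hr hpr)
    calc b p r * ∑ y ∈ M, (∏ i ∈ insert d D, b i y) * ∏ z ∈ M.erase y, (b y z)⁻¹
        = b p d * ∑ y ∈ M, (∏ i ∈ D, b i y) * (b r y * ∏ z ∈ M.erase y, (b y z)⁻¹)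
          - b r d * ∑ y ∈ M, (∏ i ∈ D, b i y) * (b p y * ∏ z ∈ M.erase y, (b y z)⁻¹) := by
          rw [Finset.mul_sum, Finset.mul_sum, Finset.mul_sum, ← Finset.sum_sub_distrib]
          refine Finset.sum_congr rfl fun y _ => ?_
          rw [Finset.prod_insert hd]
          linear_combination ((∏ i ∈ D, b i y) * ∏ z ∈ M.erase y, (b y z)⁻¹) *
            hb.mul_eq_sub p r d y
      _ = 0 := by rw [hsum_form p hp, hsum_form r hr, mul_zero, mul_zero, sub_zero]

variable [Fintype F]

theorem card_le (hS : RepresentsDistinct b S) (hb : IsDecomposable b) :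
    S.card ≤ Fintype.card F + 1 := by
  classical
  by_cases hnontriv : 1 < S.card
  · obtain ⟨u, hu, w, hw, huw⟩ := Finset.one_lt_card.1 hnontriv
    have hinj := (hS.mono (Finset.erase_subset u S)).injOn_div hb (hS hu hw huw)
      fun p hp => hS hu (Finset.mem_of_mem_erase hp) (Finset.ne_of_mem_erase hp).symm
    have hle := Finset.card_le_card_of_injOn _ (fun _ _ => Finset.mem_univ _) hinj
    rwa [Finset.card_erase_of_mem hu, Finset.card_univ, tsub_le_iff_right] at hle
  · omega

theorem exists_forall_ne_zero (hS : RepresentsDistinct b S) (hb : IsDecomposable b)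
    (hnontriv : 1 < S.card) (hcard : S.card ≤ Fintype.card F) : ∃ v, ∀ p ∈ S, b v p ≠ 0 := by
  classical
  obtain ⟨u, hu, w, hw, huw⟩ := Finset.one_lt_card.1 hnontriv
  have hlt : ((S.erase u).image fun p => b w p / b u p).card < (Finset.univ : Finset F).card := by
    refine Finset.card_image_le.trans_lt ?_
    rw [Finset.card_erase_of_mem hu, Finset.card_univ]
    omega
  obtain ⟨c, -, hc⟩ := Finset.exists_mem_notMem_of_card_lt_card hlt
  refine ⟨w - c • u, fun p hp hzero => ?_⟩
  rw [map_sub, map_smul, LinearMap.sub_apply, LinearMap.smul_apply, smul_eq_mul, sub_eq_zero]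
    at hzero
  obtain rfl | hpu := eq_or_ne p u
  · rw [hb.isAlt.self_eq_zero, mul_zero] at hzero
    exact hS hw hu huw.symm hzero
  · exact hc (Finset.mem_image.2 ⟨p, Finset.mem_erase.2 ⟨hpu, hp⟩,
      (div_eq_iff (hS hu hp hpu.symm)).2 hzero⟩)

theorem exists_superset_card_eq (hS : RepresentsDistinct b S) (hb : IsDecomposable b)
    (hnontriv : 1 < S.card) :
    ∃ T, S ⊆ T ∧ T.card = Fintype.card F + 1 ∧ RepresentsDistinct b T := by
  classical
  induction hm : Fintype.card F + 1 - S.card generalizing S with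
  | zero => exact ⟨S, subset_rfl, by have := hS.card_le hb; omega, hS⟩
  | succ m ih =>
    obtain ⟨v, hv⟩ := hS.exists_forall_ne_zero hb hnontriv (by omega)
    have hvS : v ∉ S := fun h => hv v h (hb.isAlt.self_eq_zero v)
    have hcard := Finset.card_insert_of_notMem hvS
    obtain ⟨T, hST, hT⟩ := ih (hS.insert_of_ne_zero hb hv) (by omega) (by omega)
    exact ⟨T, (Finset.subset_insert v S).trans hST, hT⟩

end RepresentsDistinct

theorem prod_univ_erase_zero_eq_neg_one [Fintype F] [DecidableEq F] :
    ∏ a ∈ Finset.univ.erase (0 : F), a = -1 := by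
  have hunits := congrArg Units.val (FiniteField.prod_univ_units_id_eq_neg_one (K := F))
  rw [Units.coe_prod, Units.val_neg, Units.val_one] at hunits
  rw [← hunits]
  exact (Finset.prod_bij (fun (a : Fˣ) _ => (a : F)) (by simp) (fun _ _ _ _ h => Units.ext h)
    (fun c hc => ⟨Units.mk0 c (Finset.ne_of_mem_erase hc), Finset.mem_univ _, rfl⟩)
    (fun _ _ => rfl)).symm

/-- The ratios `b p y / b p z` run through the nonzero elements of `F` as `p` runs through the
points of the line other than `y` and `z`. -/
theorem RepresentsDistinct.prod_erase_eq [Fintype F] [DecidableEq V] {S : Finset V} {y z : V}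
    (hS : RepresentsDistinct b S) (hb : IsDecomposable b) (hcard : S.card = Fintype.card F + 1)
    (hy : y ∈ S) (hz : z ∈ S) :
    ∏ p ∈ S.erase y, b p y = ∏ p ∈ S.erase z, b p z := by
  classical
  obtain rfl | hyz := eq_or_ne y z
  · rfl
  set E := (S.erase y).erase z with hE
  have hzy : z ∈ S.erase y := Finset.mem_erase.2 ⟨hyz.symm, hz⟩
  have hyz' : y ∈ S.erase z := Finset.mem_erase.2 ⟨hyz, hy⟩
  have hES : E ⊆ S := (Finset.erase_subset _ _).trans (Finset.erase_subset _ _)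
  have hyE : ∀ p ∈ E, b p y ≠ 0 := fun p hp =>
    hS (hES hp) hy (Finset.ne_of_mem_erase (Finset.mem_of_mem_erase hp))
  have hzE : ∀ p ∈ E, b p z ≠ 0 := fun p hp => hS (hES hp) hz (Finset.ne_of_mem_erase hp)
  have hinj : Set.InjOn (fun p => b p y / b p z) E := by
    refine ((hS.mono hES).injOn_div hb (hS hz hy hyz.symm) fun p hp =>
      hS hz (hES hp) (Finset.ne_of_mem_erase hp).symm).congr fun p _ => ?_
    simp only [← hb.isAlt.neg_eq p, neg_div_neg_eq]
  have himage : E.image (fun p => b p y / b p z) = Finset.univ.erase 0 := by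
    refine Finset.eq_of_subset_of_card_le ?_ ?_
    · exact Finset.image_subset_iff.2 fun p hp =>
        Finset.mem_erase.2 ⟨div_ne_zero (hyE p hp) (hzE p hp), Finset.mem_univ _⟩
    · rw [Finset.card_image_of_injOn hinj, Finset.card_erase_of_mem (Finset.mem_univ _),
        Finset.card_univ, hE, Finset.card_erase_of_mem hzy, Finset.card_erase_of_mem hy]
      omega
  have hprod : (∏ p ∈ E, b p y) / ∏ p ∈ E, b p z = -1 := by
    rw [← Finset.prod_div_distrib, ← prod_univ_erase_zero_eq_neg_one, ← himage,
      Finset.prod_image hinj]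
  rw [div_eq_iff (Finset.prod_ne_zero_iff.2 hzE)] at hprod
  rw [← Finset.mul_prod_erase _ _ hzy, ← Finset.mul_prod_erase _ _ hyz',
    Finset.erase_right_comm (a := z), ← hE, hprod, ← hb.isAlt.neg_eq y z]
  ring

/-- The vectors of `D` represent the points of the projective line defined by `b` that are not
represented in `Y`. If `b` is the pencil of lines through a point of an arc and `Y` consists of
the other points of the arc, then `D` represents the tangents and `∏ d ∈ D, b d v` is the product
of their equations. The constant `C` is the one in Segre's lemma of tangents. -/
structure IsTangentSystem [Fintype F] [DecidableEq V] (b : LinearMap.BilinForm F V)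
    (Y D : Finset V) (C : F) : Prop where
  card_add_card : D.card + Y.card = Fintype.card F + 1
  ne_zero : ∀ d ∈ D, ∀ y ∈ Y, b d y ≠ 0
  exists_eq_zero : ∀ v, (∀ y ∈ Y, b v y ≠ 0) → ∃ d ∈ D, b d v = 0
  const_ne_zero : C ≠ 0
  prod_mul_prod : ∀ y ∈ Y, (∏ d ∈ D, b d y) * ∏ p ∈ Y.erase y, b p y = C

theorem RepresentsDistinct.exists_isTangentSystem [Fintype F] [DecidableEq V] {Y : Finset V}
    (hY : RepresentsDistinct b Y) (hb : IsDecomposable b) (hnontriv : 1 < Y.card) :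
    ∃ D C, IsTangentSystem b Y D C := by
  obtain ⟨S, hYS, hcard, hS⟩ := hY.exists_superset_card_eq hb hnontriv
  obtain ⟨y₀, hy₀⟩ := Finset.card_pos.1 (zero_lt_one.trans hnontriv)
  have hdisj : ∀ d ∈ S \ Y, ∀ y ∈ Y, d ≠ y := fun d hd y hy h =>
    (Finset.mem_sdiff.1 hd).2 (h ▸ hy)
  refine ⟨S \ Y, ∏ p ∈ S.erase y₀, b p y₀,
    hcard ▸ Finset.card_sdiff_add_card_eq_card hYS, ?_, ?_, ?_, ?_⟩
  · exact fun d hd y hy => hS (Finset.mem_sdiff.1 hd).1 (hYS hy) (hdisj d hd y hy)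
  · intro v hv
    by_contra! hne
    have hvS : ∀ p ∈ S, b v p ≠ 0 := by
      intro p hp hzero
      by_cases hpY : p ∈ Y
      · exact hv p hpY hzero
      · refine hne p (Finset.mem_sdiff.2 ⟨hp, hpY⟩) ?_
        rw [← hb.isAlt.neg_eq, hzero, neg_zero]
    have hvS' : v ∉ S := fun h => hvS v h (hb.isAlt.self_eq_zero v)
    have := (hS.insert_of_ne_zero hb hvS).card_le hb
    rw [Finset.card_insert_of_notMem hvS'] at this
    omega
  · exact Finset.prod_ne_zero_iff.2 fun p hp =>
      hS (Finset.mem_of_mem_erase hp) (hYS hy₀) (Finset.ne_of_mem_erase hp)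
  · intro y hy
    have hunion : S \ Y ∪ Y.erase y = S.erase y := by
      grind
    have hdisjoint : Disjoint (S \ Y) (Y.erase y) :=
      Finset.sdiff_disjoint.mono_right (Finset.erase_subset y Y)
    rw [← Finset.prod_union hdisjoint, hunion]
    exact hS.prod_erase_eq hb hcard (hYS hy) (hYS hy₀)

theorem IsTangentSystem.prod_mul_prod_inv_eq [Fintype F] [DecidableEq V] {Y D B : Finset V} {C : F}
    {Q : V} (hD : IsTangentSystem b Y D C) (hb : IsDecomposable b) (hY : RepresentsDistinct b Y)
    (hBY : B ⊆ Y) (hB : B.card = D.card + 1) (hQ : ∀ y ∈ B, b Q y ≠ 0) :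
    (∏ d ∈ D, b d Q) * ∏ z ∈ B, (b Q z)⁻¹ =
      -(C * ∑ y ∈ B, (∏ p ∈ Y.erase y, b p y)⁻¹ *
        ((b y Q)⁻¹ * ∏ z ∈ B.erase y, (b y z)⁻¹)) := by
  have hQB : Q ∉ B := fun h => hQ Q h (hb.isAlt.self_eq_zero Q)
  have hinterp := ((hY.mono hBY).insert_of_ne_zero hb hQ).sum_prod_mul_prod_inv_eq_zero
    (D := D) hb (by rw [Finset.card_insert_of_notMem hQB, hB])
  rw [Finset.sum_insert hQB, Finset.erase_insert hQB] at hinterp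
  rw [eq_neg_of_add_eq_zero_left hinterp, Finset.mul_sum]
  refine congrArg _ (Finset.sum_congr rfl fun y hy => ?_)
  have hyQ : Q ≠ y := fun h => hQB (h ▸ hy)
  have hYy : ∏ p ∈ Y.erase y, b p y ≠ 0 := right_ne_zero_of_mul
    ((hD.prod_mul_prod y (hBY hy)).trans_ne hD.const_ne_zero)
  rw [Finset.erase_insert_of_ne hyQ,
    Finset.prod_insert fun h => hQB (Finset.mem_of_mem_erase h),
    ← hD.prod_mul_prod y (hBY hy), ← mul_assoc (_ * _), mul_inv_cancel_right₀ hYy]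

end Pencil

section Plane

open Matrix

variable {F : Type*} [Field F]

theorem sum_sum_erase_eq_zero_of_symm {R ι : Type*} [Semiring R] [CharP R 2] [DecidableEq ι]
    {f : ι → ι → R} (hf : ∀ x y, f x y = f y x) (A : Finset ι) :
    ∑ x ∈ A, ∑ y ∈ A.erase x, f x y = 0 := by
  rw [Finset.sum_sigma']
  refine Finset.sum_involution (fun p _ => ⟨p.2, p.1⟩) ?_ ?_ ?_ ?_
  · rintro ⟨x, y⟩ -
    rw [hf x y, CharTwo.add_self_eq_zero]
  all_goals grind

/-- The pencil of lines through the point `x` of the projective plane: the determinant of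
`x, y, z`, as a bilinear form in `y` and `z`. -/
def tripleForm (x : Fin 3 → F) : LinearMap.BilinForm F (Fin 3 → F) :=
  crossProduct.compr₂ (dotProductBilin F F x)

theorem tripleForm_apply (x y z : Fin 3 → F) : tripleForm x y z = x ⬝ᵥ y ⨯₃ z := rfl

theorem tripleForm_self_left (x z : Fin 3 → F) : tripleForm x x z = 0 :=
  dot_self_cross x z

theorem isDecomposable_tripleForm (x : Fin 3 → F) : IsDecomposable (tripleForm x) where
  isAlt y := by rw [tripleForm_apply, cross_self, dotProduct_zero]
  mul_eq_sub u v w z := by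
    simp only [tripleForm_apply, cross_apply, vec3_dotProduct, cons_val]
    ring

theorem tripleForm_ne_zero_of_linearIndependent {x y z : Fin 3 → F}
    (h : LinearIndependent F ![x, y, z]) : tripleForm x y z ≠ 0 := by
  rw [tripleForm_apply, triple_product_eq_det]
  exact ((isUnit_iff_isUnit_det _).1 (linearIndependent_rows_iff_isUnit.1 h)).ne_zero

theorem tripleForm_right_comm [CharP F 2] (x y z : Fin 3 → F) :
    tripleForm x y z = tripleForm x z y := by
  rw [← (isDecomposable_tripleForm x).isAlt.neg_eq, CharTwo.neg_eq]

theorem tripleForm_left_comm [CharP F 2] (x y z : Fin 3 → F) :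
    tripleForm x y z = tripleForm y x z := by
  rw [tripleForm_right_comm y, tripleForm_apply, tripleForm_apply, triple_product_permutation]

variable [DecidableEq (Fin 3 → F)] {K A T : Finset (Fin 3 → F)} {Q a : Fin 3 → F}

theorem IsTangentSystem.prod_tripleForm_ne_zero [Fintype F] {Y D : Finset (Fin 3 → F)} {C : F}
    {b : Fin 3 → F} (hD : IsTangentSystem (tripleForm a) Y D C) (hb : b ∈ Y) {α β : F}
    (hβ : β ≠ 0) : ∏ d ∈ D, tripleForm a d (α • a + β • b) ≠ 0 := by
  refine Finset.prod_ne_zero_iff.2 fun d hd => ?_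
  rw [map_add, map_smul, map_smul, ← (isDecomposable_tripleForm a).isAlt.neg_eq a d,
    tripleForm_self_left, neg_zero, smul_zero, zero_add]
  exact smul_ne_zero hβ (hD.ne_zero d hd b hb)

/-- A set of vectors representing an arc of the projective plane. -/
def IsVectorArc (K : Finset (Fin 3 → F)) : Prop :=
  ∀ x ∈ K, RepresentsDistinct (tripleForm x) (K.erase x)

/-- The coefficient of the pair `x`, `y` of points of the arc `K` when the product of the tangents
at `x` is interpolated at `Q` from its values on `A \ {x}`, the tangents being scaled as in Segre's
lemma. -/
def segreTerm (K A : Finset (Fin 3 → F)) (Q x y : Fin 3 → F) : F :=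
  (∏ p ∈ (K.erase x).erase y, tripleForm x p y)⁻¹ *
    ((tripleForm x y Q)⁻¹ * ∏ z ∈ (A.erase x).erase y, (tripleForm x y z)⁻¹)

theorem IsVectorArc.prod_tripleForm_eq_zero_iff [Fintype F] (hK : IsVectorArc K) {x : Fin 3 → F}
    {D : Finset (Fin 3 → F)} {C : F} (hD : IsTangentSystem (tripleForm x) (K.erase x) D C)
    (hAK : A ⊆ K) (hx : x ∈ A) (hA : A.card = D.card + 2)
    (hQ : ∀ y ∈ A, x ≠ y → tripleForm x Q y ≠ 0) :
    ∏ d ∈ D, tripleForm x d Q = 0 ↔ ∑ y ∈ A.erase x, segreTerm K A Q x y = 0 := by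
  have hQ' : ∀ y ∈ A.erase x, tripleForm x Q y ≠ 0 := fun y hy =>
    hQ y (Finset.mem_of_mem_erase hy) (Finset.ne_of_mem_erase hy).symm
  have hcard : (A.erase x).card = D.card + 1 := by rw [Finset.card_erase_of_mem hx, hA]; rfl
  have hprod : ∏ z ∈ A.erase x, (tripleForm x Q z)⁻¹ ≠ 0 :=
    Finset.prod_ne_zero_iff.2 fun z hz => inv_ne_zero (hQ' z hz)
  have hinterp := hD.prod_mul_prod_inv_eq (isDecomposable_tripleForm x) (hK x (hAK hx))
    (Finset.erase_subset_erase x hAK) hcard hQ'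
  rw [← mul_eq_zero_iff_right hprod, hinterp, neg_eq_zero, mul_eq_zero_iff_left hD.const_ne_zero]
  rfl

variable [CharP F 2]

theorem segreTerm_comm (K A : Finset (Fin 3 → F)) (Q x y : Fin 3 → F) :
    segreTerm K A Q x y = segreTerm K A Q y x := by
  have hswap : ∀ p, tripleForm x p y = tripleForm y p x := fun p => by
    rw [tripleForm_right_comm x, tripleForm_left_comm x, tripleForm_right_comm y]
  simp only [segreTerm, hswap, tripleForm_left_comm x y, Finset.erase_right_comm (a := x)]

variable [Fintype F]

/-- The sum of all Segre terms vanishes by symmetry, and the terms with `x ∈ S` already sum to zero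
if `Q` lies on a tangent at each point of `S`. -/
theorem IsVectorArc.prod_tripleForm_eq_zero (hK : IsVectorArc K)
    {D : (Fin 3 → F) → Finset (Fin 3 → F)} {C : (Fin 3 → F) → F}
    (hD : ∀ x ∈ K, IsTangentSystem (tripleForm x) (K.erase x) (D x) (C x))
    {S : Finset (Fin 3 → F)} (haS : a ∉ S) (hAK : insert a S ⊆ K) (hS : S.card = (D a).card + 1)
    (hQ : ((insert a S : Finset _) : Set (Fin 3 → F)).Pairwise fun x y => tripleForm x Q y ≠ 0)
    (hzero : ∀ x ∈ S, ∏ d ∈ D x, tripleForm x d Q = 0) :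
    ∏ d ∈ D a, tripleForm a d Q = 0 := by
  have haA := Finset.mem_insert_self a S
  have hiff : ∀ x ∈ insert a S, (∏ d ∈ D x, tripleForm x d Q = 0 ↔
      ∑ y ∈ (insert a S).erase x, segreTerm K (insert a S) Q x y = 0) := by
    intro x hx
    refine hK.prod_tripleForm_eq_zero_iff (hD x (hAK hx)) hAK hx ?_ fun y hy => hQ hx hy
    have hDx := (hD x (hAK hx)).card_add_card
    have hDa := (hD a (hAK haA)).card_add_card
    rw [Finset.card_erase_of_mem (hAK hx)] at hDx
    rw [Finset.card_erase_of_mem (hAK haA)] at hDa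
    rw [Finset.card_insert_of_notMem haS]
    omega
  have hsum := sum_sum_erase_eq_zero_of_symm (segreTerm_comm K (insert a S) Q) (insert a S)
  rw [Finset.sum_insert haS, Finset.sum_eq_zero fun x hx =>
    (hiff x (Finset.mem_insert_of_mem hx)).1 (hzero x hx), add_zero] at hsum
  exact (hiff a haA).2 hsum

theorem IsVectorArc.card_add_card_le (hK : IsVectorArc K) {a b : Fin 3 → F} (ha : a ∈ K)
    (hb : b ∈ K) (hab : a ≠ b) {α β : F} (hβ : β ≠ 0) (hQ : Q = α • a + β • b) (hTK : T ⊆ K)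
    (hT : ∀ x ∈ T, ∀ y ∈ K, x ≠ y → tripleForm x Q y ≠ 0) :
    T.card + K.card ≤ Fintype.card F + 2 := by
  have haT : a ∉ T := fun h => hT a h b hb hab <| by
    simp [hQ, tripleForm_self_left, (isDecomposable_tripleForm a).isAlt.self_eq_zero]
  have hbT : b ∉ T := fun h => hT b h a ha hab.symm <| by
    simp [hQ, tripleForm_self_left, (isDecomposable_tripleForm b).isAlt.self_eq_zero]
  have hTcard : T.card + 2 ≤ K.card := by
    have hle := Finset.card_le_card (Finset.insert_subset ha (Finset.insert_subset hb hTK))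
    rwa [Finset.card_insert_of_notMem (by simp [hab, haT]), Finset.card_insert_of_notMem hbT] at hle
  by_contra! hlt
  have hq : 1 < Fintype.card F := Fintype.one_lt_card
  choose! D C hD using fun x hx => (hK x hx).exists_isTangentSystem (isDecomposable_tripleForm x)
    (by rw [Finset.card_erase_of_mem hx]; omega)
  have hDa := (hD a ha).card_add_card
  rw [Finset.card_erase_of_mem ha] at hDa
  obtain ⟨S, hST, hScard⟩ := Finset.exists_subset_card_eq (show (D a).card + 1 ≤ T.card by omega)
  have hSK := hST.trans hTK
  have hQS : ((insert a S : Finset _) : Set (Fin 3 → F)).Pairwise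
      fun x y => tripleForm x Q y ≠ 0 := by
    rw [Finset.coe_insert]
    refine Set.Pairwise.insert (fun x hx y hy => hT x (hST hx) y (hSK hy)) fun y hy hay => ?_
    have hya := hT y (hST hy) a ha hay.symm
    refine ⟨?_, hya⟩
    rwa [tripleForm_right_comm, tripleForm_left_comm, tripleForm_right_comm]
  have hzero : ∀ x ∈ S, ∏ d ∈ D x, tripleForm x d Q = 0 := by
    intro x hx
    obtain ⟨d, hd, hdQ⟩ := (hD x (hSK hx)).exists_eq_zero Q fun y hy =>
      hT x (hST hx) y (Finset.mem_of_mem_erase hy) (Finset.ne_of_mem_erase hy).symm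
    exact Finset.prod_eq_zero hd hdQ
  have hprod := hK.prod_tripleForm_eq_zero hD (fun h => haT (hST h))
    (Finset.insert_subset ha hSK) hScard hQS hzero
  exact (hD a ha).prod_tripleForm_ne_zero (Finset.mem_erase.2 ⟨hab.symm, hb⟩) hβ (hQ ▸ hprod)

end Plane

section LinearAlgebra

variable {V : Type*} [AddCommGroup V]

section DivisionRing

variable {k : Type*} [DivisionRing k] [Module k V] (W : Submodule k V)

theorem exists_linearMap_disjoint_ker {V' : Type*} [AddCommGroup V'] [Module k V']
    [FiniteDimensional k W] [FiniteDimensional k V'] (hW : finrank k W = finrank k V') :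
    ∃ g : V →ₗ[k] V', Disjoint W (LinearMap.ker g) := by
  obtain ⟨g, hg⟩ := (LinearEquiv.ofFinrankEq W V' hW).toLinearMap.exists_extend
  refine ⟨g, LinearMap.disjoint_ker.2 fun v hv hgv => ?_⟩
  have hzero : LinearEquiv.ofFinrankEq W V' hW ⟨v, hv⟩ = 0 :=
    (LinearMap.congr_fun hg ⟨v, hv⟩).symm.trans hgv
  exact congrArg Subtype.val ((LinearEquiv.map_eq_zero_iff _).1 hzero)

theorem finrank_comap_mkQ [FiniteDimensional k V] (L : Submodule k (V ⧸ W)) :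
    finrank k (L.comap W.mkQ) = finrank k W + finrank k L := by
  have hmap : (L.comap W.mkQ).map W.mkQ = L :=
    Submodule.map_comap_eq_of_surjective W.mkQ_surjective L
  have hquot := (Submodule.quotientQuotientEquivQuotient W _ (W.le_comap_mkQ L)).finrank_eq
  rw [hmap] at hquot
  have hV := (L.comap W.mkQ).finrank_quotient_add_finrank
  have hVW := W.finrank_quotient_add_finrank
  have hL := L.finrank_quotient_add_finrank
  omega

end DivisionRing

open scoped LinearAlgebra.Projectivization

variable {k : Type*} [Field k] [Module k V] {W : Submodule k V}

theorem existsUnique_submodule_le_comap_mkQ {P : ℙ k V} (hP : ¬ P.submodule ≤ W) :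
    ∃! L : ℙ k (V ⧸ W), P.submodule ≤ L.submodule.comap W.mkQ := by
  have hrep : W.mkQ P.rep ≠ 0 := by
    rwa [Projectivization.submodule_eq, Submodule.span_singleton_le_iff_mem,
      ← Submodule.Quotient.mk_eq_zero] at hP
  have hiff : ∀ L : ℙ k (V ⧸ W), P.submodule ≤ L.submodule.comap W.mkQ ↔
      (Projectivization.mk k _ hrep).submodule ≤ L.submodule := fun L => by
    rw [Projectivization.submodule_eq P, Projectivization.submodule_mk,
      Submodule.span_singleton_le_iff_mem, Submodule.span_singleton_le_iff_mem,
      Submodule.mem_comap]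
  refine ⟨Projectivization.mk k _ hrep, (hiff _).2 le_rfl, fun L hL => ?_⟩
  refine Projectivization.submodule_injective ?_
  refine (Submodule.eq_of_le_of_finrank_eq ((hiff L).1 hL) ?_).symm
  rw [Projectivization.finrank_submodule, Projectivization.finrank_submodule]

open scoped Classical in
theorem sum_card_filter_submodule_le_comap_mkQ [Fintype (ℙ k (V ⧸ W))] {X : Finset (ℙ k V)}
    (hX : ∀ P ∈ X, ¬ P.submodule ≤ W) :
    ∑ L : ℙ k (V ⧸ W), {P ∈ X | P.submodule ≤ L.submodule.comap W.mkQ}.card = X.card := by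
  simp only [Finset.card_filter]
  rw [Finset.sum_comm, Finset.card_eq_sum_ones]
  refine Finset.sum_congr rfl fun P hP => ?_
  rw [← Finset.card_filter]
  exact (Fintype.existsUnique_iff_card_one _).1 (existsUnique_submodule_le_comap_mkQ (hX P hP))

end LinearAlgebra

section Space

variable {F : Type*} [Field F] {n : ℕ}

section Collinear

variable {P₁ P₂ P₃ Q : PGPoint F n}

theorem coll3_left_comm : Coll3 P₁ P₂ P₃ ↔ Coll3 P₂ P₁ P₃ := by
  rw [Coll3, Coll3, sup_comm P₁.submodule]

theorem coll3_right_comm : Coll3 P₁ P₂ P₃ ↔ Coll3 P₁ P₃ P₂ := by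
  rw [Coll3, Coll3, sup_right_comm]

theorem not_coll3_iff_linearIndependent :
    ¬ Coll3 P₁ P₂ P₃ ↔ LinearIndependent F ![P₁.rep, P₂.rep, P₃.rep] := by
  have hspan : Submodule.span F (Set.range ![P₁.rep, P₂.rep, P₃.rep]) =
      P₁.submodule ⊔ P₂.submodule ⊔ P₃.submodule := by
    simp only [Projectivization.submodule_eq, ← Submodule.span_union, Matrix.range_cons,
      Matrix.range_empty, Set.union_empty, Set.union_assoc]
  rw [linearIndependent_iff_card_le_finrank_span, Set.finrank, hspan, Coll3, not_le]
  rfl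

theorem finrank_submodule_sup_submodule (h : P₁ ≠ P₂) :
    finrank F ↥(P₁.submodule ⊔ P₂.submodule) = 2 := by
  have hli := Projectivization.linearIndependent_pair_iff_ne.2 h
  have hspan := finrank_span_eq_card hli
  rwa [Matrix.range_cons, Matrix.range_cons, Matrix.range_empty, Set.union_empty,
    Submodule.span_union, ← Projectivization.submodule_eq, ← Projectivization.submodule_eq,
    Fintype.card_fin] at hspan

theorem coll3_iff_submodule_le_sup (h : P₁ ≠ P₂) :
    Coll3 P₁ P₂ P₃ ↔ P₃.submodule ≤ P₁.submodule ⊔ P₂.submodule := by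
  refine ⟨fun hcoll => ?_, fun hle => ?_⟩
  · rw [Submodule.eq_of_le_of_finrank_le (le_sup_left (b := P₃.submodule))
      (hcoll.trans (finrank_submodule_sup_submodule h).ge)]
    exact le_sup_right
  · rw [Coll3, sup_eq_left.2 hle, finrank_submodule_sup_submodule h]

theorem rep_mem_of_submodule_le {W : Submodule F (Fin (n + 1) → F)} (h : P₁.submodule ≤ W) :
    P₁.rep ∈ W := by
  rwa [Projectivization.submodule_eq, Submodule.span_singleton_le_iff_mem] at h

theorem IsCap.mono {K K' : Set (PGPoint F n)} (hK : IsCap K) (h : K' ⊆ K) : IsCap K' :=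
  fun P₁ h₁ P₂ h₂ P₃ h₃ => hK P₁ (h h₁) P₂ (h h₂) P₃ (h h₃)

theorem IsCompleteCap.exists_coll3 {K : Set (PGPoint F n)} (hK : IsCompleteCap K) (hQ : Q ∉ K) :
    ∃ P₁ ∈ K, ∃ P₂ ∈ K, P₁ ≠ P₂ ∧ Coll3 P₁ P₂ Q := by
  have hnot := hK.2 Q hQ
  simp only [IsCap, not_forall, not_not] at hnot
  obtain ⟨P₁, h₁, P₂, h₂, P₃, h₃, h₁₂, h₁₃, h₂₃, hcoll⟩ := hnot
  obtain rfl | h₁ := h₁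
  · exact ⟨P₂, h₂.resolve_left h₁₂.symm, P₃, h₃.resolve_left h₁₃.symm, h₂₃,
      coll3_right_comm.1 (coll3_left_comm.1 hcoll)⟩
  obtain rfl | h₂ := h₂
  · exact ⟨P₁, h₁, P₃, h₃.resolve_left h₂₃.symm, h₁₃, coll3_right_comm.1 hcoll⟩
  obtain rfl | h₃ := h₃
  · exact ⟨P₁, h₁, P₂, h₂, h₁₂, hcoll⟩
  · exact absurd hcoll (hK.1 P₁ h₁ P₂ h₂ P₃ h₃ h₁₂ h₁₃ h₂₃)

end Collinear

open scoped Classical in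
/-- The points of `K` at which the line joining them to `Q` is a tangent of `K`. -/
noncomputable def contactPoints (K : Finset (PGPoint F n)) (Q : PGPoint F n) :
    Finset (PGPoint F n) :=
  {R ∈ K | ∀ P ∈ K, Coll3 R Q P → P = R}

variable {K : Finset (PGPoint F n)} {P₁ P₂ Q : PGPoint F n}

theorem mem_contactPoints {R : PGPoint F n} :
    R ∈ contactPoints K Q ↔ R ∈ K ∧ ∀ P ∈ K, Coll3 R Q P → P = R := by
  simp only [contactPoints, Finset.mem_filter]

theorem contactPoints_subset : contactPoints K Q ⊆ K := fun _ hR => (mem_contactPoints.1 hR).1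

theorem ncard_tangents_le_card_contactPoints (hQ : Q ∉ K) :
    {ℓ : Submodule F (Fin (n + 1) → F) | IsTangent (K : Set (PGPoint F n)) ℓ ∧
      Q.submodule ≤ ℓ}.ncard ≤ (contactPoints K Q).card := by
  classical
  refine le_trans ?_
    (Finset.card_image_le (f := fun R : PGPoint F n => R.submodule ⊔ Q.submodule))
  rw [← Set.ncard_coe_finset]
  refine Set.ncard_le_ncard ?_ (Finset.finite_toSet _)
  rintro ℓ ⟨⟨hrank, hone⟩, hQℓ⟩
  obtain ⟨R, hR⟩ := Set.ncard_eq_one.1 hone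
  obtain ⟨hRℓ, hRK⟩ : R ∈ ptsIn ℓ ∩ K := hR ▸ Set.mem_singleton R
  have hRQ : R ≠ Q := fun h => hQ (h ▸ hRK)
  have hℓ : R.submodule ⊔ Q.submodule = ℓ := Submodule.eq_of_le_of_finrank_le (sup_le hRℓ hQℓ)
    (hrank.trans (finrank_submodule_sup_submodule hRQ).symm).le
  refine Finset.mem_coe.2 (Finset.mem_image.2 ⟨R, mem_contactPoints.2 ⟨hRK, ?_⟩, hℓ⟩)
  intro P hP hcoll
  have hPℓ : P.submodule ≤ ℓ := hℓ ▸ (coll3_iff_submodule_le_sup hRQ).1 hcoll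
  exact hR.subset ⟨hPℓ, hP⟩

theorem contactPoints_subset_erase_erase [DecidableEq (PGPoint F n)] (h₁ : P₁ ∈ K) (h₂ : P₂ ∈ K)
    (h₁₂ : P₁ ≠ P₂) (hQ : Coll3 P₁ P₂ Q) : contactPoints K Q ⊆ (K.erase P₁).erase P₂ := by
  intro R hR
  obtain ⟨hRK, hR⟩ := mem_contactPoints.1 hR
  refine Finset.mem_erase.2 ⟨?_, Finset.mem_erase.2 ⟨?_, hRK⟩⟩
  · rintro rfl
    exact h₁₂ (hR P₁ h₁ (coll3_right_comm.1 (coll3_left_comm.1 hQ)))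
  · rintro rfl
    exact h₁₂ (hR P₂ h₂ (coll3_right_comm.1 hQ)).symm

section Chart

variable {π : Submodule F (Fin (n + 1) → F)} {g : (Fin (n + 1) → F) →ₗ[F] (Fin 3 → F)}

theorem tripleForm_map_rep_ne_zero {P₁ P₂ P₃ : PGPoint F n} (hg : Disjoint π (LinearMap.ker g))
    (h₁ : P₁.submodule ≤ π) (h₂ : P₂.submodule ≤ π) (h₃ : P₃.submodule ≤ π)
    (h : ¬ Coll3 P₁ P₂ P₃) : tripleForm (g P₁.rep) (g P₂.rep) (g P₃.rep) ≠ 0 := by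
  have hspan : Submodule.span F (Set.range ![P₁.rep, P₂.rep, P₃.rep]) ≤ π := by
    rw [Submodule.span_le, Set.range_subset_iff]
    intro i
    fin_cases i
    exacts [rep_mem_of_submodule_le h₁, rep_mem_of_submodule_le h₂, rep_mem_of_submodule_le h₃]
  have hli := (not_coll3_iff_linearIndependent.1 h).map (hg.mono_left hspan)
  refine tripleForm_ne_zero_of_linearIndependent ?_
  rwa [← FinVec.map_eq] at hli

theorem injOn_map_rep (hg : Disjoint π (LinearMap.ker g)) :
    Set.InjOn (fun P : PGPoint F n => g P.rep) (ptsIn π) := by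
  intro P hP P' hP' h
  have hrep := LinearMap.injOn_of_disjoint_ker le_rfl hg (rep_mem_of_submodule_le hP)
    (rep_mem_of_submodule_le hP') h
  rw [← P.mk_rep, ← P'.mk_rep]
  simp only [hrep]

theorem IsCap.isVectorArc_image [DecidableEq (Fin 3 → F)] (hK : IsCap (K : Set (PGPoint F n)))
    (hg : Disjoint π (LinearMap.ker g)) (hKπ : ∀ P ∈ K, P.submodule ≤ π) :
    IsVectorArc (K.image fun P => g P.rep) := by
  intro x hx y hy z hz hyz
  obtain ⟨hyx, hyK⟩ := Finset.mem_erase.1 hy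
  obtain ⟨hzx, hzK⟩ := Finset.mem_erase.1 hz
  obtain ⟨P₁, h₁, rfl⟩ := Finset.mem_image.1 hx
  obtain ⟨P₂, h₂, rfl⟩ := Finset.mem_image.1 hyK
  obtain ⟨P₃, h₃, rfl⟩ := Finset.mem_image.1 hzK
  exact tripleForm_map_rep_ne_zero hg (hKπ P₁ h₁) (hKπ P₂ h₂) (hKπ P₃ h₃)
    (hK P₁ h₁ P₂ h₂ P₃ h₃ (fun h => hyx (h ▸ rfl)) (fun h => hzx (h ▸ rfl))
      fun h => hyz (h ▸ rfl))

end Chart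

variable [Fintype F] [CharP F 2]

theorem IsCap.card_contactPoints_add_card_le (hK : IsCap (K : Set (PGPoint F n))) (h₁ : P₁ ∈ K)
    (h₂ : P₂ ∈ K) (h₁₂ : P₁ ≠ P₂) (hQ : Q ∉ K) (hcoll : Coll3 P₁ P₂ Q)
    {π : Submodule F (Fin (n + 1) → F)} (hπ : finrank F π = 3) (hKπ : ∀ P ∈ K, P.submodule ≤ π) :
    (contactPoints K Q).card + K.card ≤ Fintype.card F + 2 := by
  classical
  obtain ⟨g, hg⟩ := exists_linearMap_disjoint_ker π (V' := Fin 3 → F)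
    (hπ.trans (finrank_fin_fun F).symm)
  have hinj : Set.InjOn (fun P : PGPoint F n => g P.rep) K := (injOn_map_rep hg).mono hKπ
  have hQsup : Q.submodule ≤ P₁.submodule ⊔ P₂.submodule :=
    (coll3_iff_submodule_le_sup h₁₂).1 hcoll
  have hQπ : Q.submodule ≤ π := hQsup.trans (sup_le (hKπ P₁ h₁) (hKπ P₂ h₂))
  obtain ⟨α, β, hαβ⟩ : ∃ α β : F, α • P₁.rep + β • P₂.rep = Q.rep := by
    rw [← Submodule.mem_span_pair, Submodule.span_insert, ← Projectivization.submodule_eq,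
      ← Projectivization.submodule_eq]
    exact rep_mem_of_submodule_le hQsup
  have hβ : β ≠ 0 := by
    rintro rfl
    rw [zero_smul, add_zero] at hαβ
    refine hQ ?_
    rwa [← Q.mk_rep, (Projectivization.mk_eq_mk_iff' F _ _ Q.rep_nonzero P₁.rep_nonzero).2
      ⟨α, hαβ⟩, P₁.mk_rep]
  rw [← Finset.card_image_of_injOn hinj,
    ← Finset.card_image_of_injOn (hinj.mono (Finset.coe_subset.2 contactPoints_subset))]
  refine (hK.isVectorArc_image hg hKπ).card_add_card_le (Q := g Q.rep)
    (Finset.mem_image_of_mem _ h₁) (Finset.mem_image_of_mem _ h₂) (hinj.ne h₁ h₂ h₁₂) hβ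
    (by rw [← hαβ, map_add, map_smul, map_smul])
    (Finset.image_subset_image contactPoints_subset) ?_
  intro x hx y hy hxy
  obtain ⟨R, hR, rfl⟩ := Finset.mem_image.1 hx
  obtain ⟨P, hP, rfl⟩ := Finset.mem_image.1 hy
  obtain ⟨hRK, hR⟩ := mem_contactPoints.1 hR
  exact tripleForm_map_rep_ne_zero hg (hKπ R hRK) hQπ (hKπ P hP)
    fun h => hxy (congrArg (fun P : PGPoint F n => g P.rep) (hR P hP h).symm)

theorem IsCap.card_contactPoints_add_card_filter_le [DecidableEq (PGPoint F n)]
    (hK : IsCap (K : Set (PGPoint F n))) (h₁ : P₁ ∈ K) (h₂ : P₂ ∈ K) (h₁₂ : P₁ ≠ P₂) (hQ : Q ∉ K)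
    (hcoll : Coll3 P₁ P₂ Q) {π : Submodule F (Fin (n + 1) → F)}
    [DecidablePred fun P : PGPoint F n => P.submodule ≤ π] (hπ : finrank F π = 3)
    (h₁π : P₁.submodule ≤ π) (h₂π : P₂.submodule ≤ π) :
    {P ∈ contactPoints K Q | P.submodule ≤ π}.card +
      {P ∈ (K.erase P₁).erase P₂ | P.submodule ≤ π}.card ≤ Fintype.card F := by
  have h₁K : P₁ ∈ {P ∈ K | P.submodule ≤ π} := Finset.mem_filter.2 ⟨h₁, h₁π⟩
  have h₂K : P₂ ∈ {P ∈ K | P.submodule ≤ π} := Finset.mem_filter.2 ⟨h₂, h₂π⟩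
  have hcap : IsCap (({P ∈ K | P.submodule ≤ π} : Finset _) : Set (PGPoint F n)) :=
    hK.mono (Finset.coe_subset.2 (Finset.filter_subset _ K))
  have hplane := hcap.card_contactPoints_add_card_le h₁K h₂K h₁₂
    (fun h => hQ (Finset.mem_of_mem_filter Q h)) hcoll hπ fun P hP => (Finset.mem_filter.1 hP).2
  have hcontact : {P ∈ contactPoints K Q | P.submodule ≤ π} ⊆
      contactPoints {P ∈ K | P.submodule ≤ π} Q := by
    intro R hR
    obtain ⟨hR, hRπ⟩ := Finset.mem_filter.1 hR
    obtain ⟨hRK, hR⟩ := mem_contactPoints.1 hR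
    exact mem_contactPoints.2 ⟨Finset.mem_filter.2 ⟨hRK, hRπ⟩,
      fun P hP => hR P (Finset.mem_of_mem_filter P hP)⟩
  have hle := Finset.card_le_card hcontact
  have herase := Finset.card_erase_add_one (Finset.mem_erase.2 ⟨h₁₂.symm, h₂K⟩)
  have herase' := Finset.card_erase_add_one h₁K
  rw [Finset.filter_erase, Finset.filter_erase]
  omega

theorem IsCap.card_contactPoints_add_card_erase_le [DecidableEq (PGPoint F n)]
    (hK : IsCap (K : Set (PGPoint F n))) (h₁ : P₁ ∈ K) (h₂ : P₂ ∈ K) (h₁₂ : P₁ ≠ P₂) (hQ : Q ∉ K)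
    (hcoll : Coll3 P₁ P₂ Q) :
    (contactPoints K Q).card + ((K.erase P₁).erase P₂).card ≤
      ∑ i ∈ Finset.Icc 1 (n - 1), Fintype.card F ^ i := by
  classical
  set W := P₁.submodule ⊔ P₂.submodule
  let _ : Fintype (Projectivization F ((Fin (n + 1) → F) ⧸ W)) := Fintype.ofFinite _
  have hrank : finrank F ((Fin (n + 1) → F) ⧸ W) = n - 1 := by
    have hadd := W.finrank_quotient_add_finrank
    rw [finrank_submodule_sup_submodule h₁₂, finrank_fin_fun] at hadd
    omega
  have hdisj : ∀ P ∈ (K.erase P₁).erase P₂, ¬ P.submodule ≤ W := by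
    intro P hP hPW
    obtain ⟨hP₂, hP⟩ := Finset.mem_erase.1 hP
    obtain ⟨hP₁, hP⟩ := Finset.mem_erase.1 hP
    exact hK P₁ h₁ P₂ h₂ P hP h₁₂ hP₁.symm hP₂.symm ((coll3_iff_submodule_le_sup h₁₂).2 hPW)
  have hplane : ∀ L : Projectivization F ((Fin (n + 1) → F) ⧸ W),
      {P ∈ contactPoints K Q | P.submodule ≤ L.submodule.comap W.mkQ}.card +
        {P ∈ (K.erase P₁).erase P₂ | P.submodule ≤ L.submodule.comap W.mkQ}.card ≤
      Fintype.card F := fun L =>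
    hK.card_contactPoints_add_card_filter_le h₁ h₂ h₁₂ hQ hcoll
      (by rw [finrank_comap_mkQ, finrank_submodule_sup_submodule h₁₂, L.finrank_submodule])
      (le_sup_left.trans (W.le_comap_mkQ _)) (le_sup_right.trans (W.le_comap_mkQ _))
  have hsum := Finset.sum_le_card_nsmul Finset.univ _ _ fun L _ => hplane L
  rw [Finset.sum_add_distrib, sum_card_filter_submodule_le_comap_mkQ hdisj,
    sum_card_filter_submodule_le_comap_mkQ fun P hP =>
      hdisj P (contactPoints_subset_erase_erase h₁ h₂ h₁₂ hcoll hP), Finset.card_univ,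
    ← Nat.card_eq_fintype_card, Projectivization.card_of_finrank F _ hrank,
    Nat.card_eq_fintype_card, smul_eq_mul, Finset.sum_mul] at hsum
  refine hsum.trans_eq ?_
  simp only [← pow_succ, Finset.range_eq_Ico]
  exact Finset.sum_Ico_add' (fun i => Fintype.card F ^ i) 0 (n - 1) 1

end Space

theorem stmt14_general (F : Type*) [Field F] [Fintype F] (q : ℕ) (hcard : Fintype.card F = q)
    (hqeven : Even q) (n : ℕ) (K : Set (PGPoint F n)) (hK : IsCap K) {P₁ P₂ Q : PGPoint F n}
    (h₁ : P₁ ∈ K) (h₂ : P₂ ∈ K) (h₁₂ : P₁ ≠ P₂) (hQ : Q ∉ K) (hcoll : Coll3 P₁ P₂ Q) :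
    (({ℓ : Submodule F (Fin (n + 1) → F) | IsTangent K ℓ ∧ Q.submodule ≤ ℓ}.ncard : ℝ))
      ≤ (∑ i ∈ Finset.Icc 1 (n - 1), (q : ℝ) ^ i) + 2 - (K.ncard : ℝ) := by
  classical
  subst hcard
  have : CharP F 2 :=
    ringChar.of_eq (FiniteField.even_card_iff_char_two.2 (Nat.even_iff.1 hqeven))
  lift K to Finset (PGPoint F n) using K.toFinite
  have htangents := ncard_tangents_le_card_contactPoints hQ
  have hcontact := hK.card_contactPoints_add_card_erase_le h₁ h₂ h₁₂ hQ hcoll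
  have herase₂ := Finset.card_erase_add_one (Finset.mem_erase.2 ⟨h₁₂.symm, h₂⟩)
  have herase₁ := Finset.card_erase_add_one h₁
  rw [Set.ncard_coe_finset, le_sub_iff_add_le]
  norm_cast
  omega

theorem stmt14 (F : Type*) [Field F] [Fintype F] (q : ℕ) (hcard : Fintype.card F = q)
    (hqeven : Even q) (n : ℕ) (hn : 3 ≤ n)
    (K : Set (PGPoint F n)) (hK : IsCompleteCap K) :
    ∀ Q : PGPoint F n, Q ∉ K →
      (({ℓ : Submodule F (Fin (n + 1) → F) | IsTangent K ℓ ∧ Q.submodule ≤ ℓ}.ncard : ℝ))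
        ≤ (∑ i ∈ Finset.Icc 1 (n - 1), (q : ℝ) ^ i) + 2 - (K.ncard : ℝ) := by
  intro Q hQ
  obtain ⟨P₁, h₁, P₂, h₂, h₁₂, hcoll⟩ := hK.exists_coll3 hQ
  exact stmt14_general F q hcard hqeven n K hK.1 h₁ h₂ h₁₂ hQ hcoll
end

section
/- Let q be an even prime power with q > 2. Then the maximum value of k for which a k-cap exists in PG(3, q) is q² + 1; that is, every k-cap in PG(3, q) satisfies k ≤ q² + 1, and there exists a (q² + 1)-cap in PG(3, q). -/
open Module

/-!
Upper bound: every cap lies in a complete cap, so suppose that `K` is a complete cap with at least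
`q² + 2` points. A plane section with `m` points has `q + 2 - m` tangents at each of its points.
If `K` had no tangent, then all nonempty plane sections would have `q + 2` points, and counting `K`
along a secant and along an external line would give `q + 2 ∣ 4`. So `K` has a tangent, and by
counting `K` along it some plane `W` through it contains exactly `q + 1` points of `K`. As `q` is
even, parity shows that the tangents in `W` pass through one point `N`, the nucleus. No secant
passes through `N`: each plane through such a secant would meet `W` in a tangent, hence contain at
most `q + 1` points of `K`, and `K` would have at most `q² + 1` points. So `N` extends the cap `K`,
a contradiction.

Existence: on an elliptic quadric the polar form does not vanish at any two distinct points, so no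
three of its `q² + 1` points are collinear.
-/

open Projectivization

section Pencil

variable {F V α : Type*} [Field F] [AddCommGroup V] [Module F V] [Finite V]
  {A B : Submodule F V}

/-- The pencil of subspaces of `B` that contain `A` and have dimension one more than `A`: the lines
of a plane through a point, or the planes of a solid through a line. -/
noncomputable def pencil (A B : Submodule F V) : Finset (Submodule F V) :=
  (Set.toFinite {C | A ≤ C ∧ C ≤ B ∧ finrank F C = finrank F A + 1}).toFinset

theorem mem_pencil {C : Submodule F V} :
    C ∈ pencil A B ↔ A ≤ C ∧ C ≤ B ∧ finrank F C = finrank F A + 1 := by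
  simp [pencil]

theorem existsUnique_mem_pencil (hAB : A ≤ B) {x : V} (hxB : x ∈ B) (hxA : x ∉ A) :
    ∃! C, C ∈ pencil A B ∧ x ∈ C := by
  have hrank : finrank F ↥(A ⊔ F ∙ x) = finrank F A + 1 := Submodule.finrank_sup_span_singleton hxA
  refine ⟨A ⊔ F ∙ x, ⟨mem_pencil.2 ⟨le_sup_left, ?_, hrank⟩, ?_⟩, ?_⟩
  · exact sup_le hAB ((Submodule.span_singleton_le_iff_mem x B).2 hxB)
  · exact Submodule.mem_sup_right (Submodule.mem_span_singleton_self x)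
  · rintro C ⟨hC, hxC⟩
    obtain ⟨hAC, -, hCrank⟩ := mem_pencil.1 hC
    have hle : A ⊔ F ∙ x ≤ C := sup_le hAC ((Submodule.span_singleton_le_iff_mem x C).2 hxC)
    exact (Submodule.eq_of_le_of_finrank_eq hle (hrank.trans hCrank.symm)).symm

-- `#{C | x ∈ C} = (#pencil - 1) [x ∈ A] + [x ∈ B]`, arranged so that no subtraction occurs.
open Classical in
theorem card_filter_mem_pencil (hAB : A ≤ B) (x : V) :
    (pencil A B).card * (if x ∈ A then 1 else 0) + (if x ∈ B then 1 else 0) =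
      {C ∈ pencil A B | x ∈ C}.card + if x ∈ A then 1 else 0 := by
  by_cases hxA : x ∈ A
  · have hall : {C ∈ pencil A B | x ∈ C} = pencil A B :=
      Finset.filter_true_of_mem fun C hC => (mem_pencil.1 hC).1 hxA
    simp [hxA, hAB hxA, hall]
  by_cases hxB : x ∈ B
  · have hone : {C ∈ pencil A B | x ∈ C}.card = 1 := by
      simpa [Finset.card_eq_one, Finset.singleton_iff_unique_mem] using
        existsUnique_mem_pencil hAB hxB hxA
    simp [hxA, hxB, hone]
  · have hnone : {C ∈ pencil A B | x ∈ C} = ∅ :=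
      Finset.filter_false_of_mem fun C hC hxC => hxB ((mem_pencil.1 hC).2.1 hxC)
    simp [hxA, hxB, hnone]

theorem sum_ncard_inter_preimage_pencil [Finite α] (hAB : A ≤ B) (f : α → V) (S : Set α) :
    (pencil A B).card * (S ∩ f ⁻¹' A).ncard + (S ∩ f ⁻¹' B).ncard =
      ∑ C ∈ pencil A B, (S ∩ f ⁻¹' C).ncard + (S ∩ f ⁻¹' A).ncard := by
  classical
  have := Fintype.ofFinite α
  have hcount (W : Submodule F V) :
      (S ∩ f ⁻¹' W).ncard = ∑ a ∈ S.toFinset, if f a ∈ W then 1 else 0 := by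
    rw [← Finset.card_filter, ← Set.ncard_coe_finset]
    congr
    ext a
    simp
  simp only [hcount]
  rw [Finset.sum_comm, Finset.mul_sum, ← Finset.sum_add_distrib, ← Finset.sum_add_distrib]
  refine Finset.sum_congr rfl fun a _ => ?_
  rw [card_filter_mem_pencil hAB, Finset.card_filter]

theorem card_pencil [Finite F] (hAB : A ≤ B) (hrank : finrank F B = finrank F A + 2) :
    (pencil A B).card = Nat.card F + 1 := by
  have hcard (W : Submodule F V) : (W : Set V).ncard = Nat.card F ^ finrank F W :=
    natCard_eq_pow_finrank
  have hcount := sum_ncard_inter_preimage_pencil hAB id Set.univ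
  have hsum : ∑ C ∈ pencil A B, (C : Set V).ncard =
      (pencil A B).card * (Nat.card F * Nat.card F ^ finrank F A) :=
    Finset.sum_const_nat fun C hC => by rw [hcard, (mem_pencil.1 hC).2.2, pow_succ']
  simp only [Set.preimage_id, Set.univ_inter] at hcount
  rw [hsum, hcard, hcard, hrank] at hcount
  have hq : 1 < Nat.card F := Finite.one_lt_card
  have hfactor : ((pencil A B).card : ℤ) * ((Nat.card F - 1) * Nat.card F ^ finrank F A) =
      (Nat.card F + 1) * ((Nat.card F - 1) * Nat.card F ^ finrank F A) := by
    zify at hcount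
    linear_combination -hcount
  have hne : ((Nat.card F : ℤ) - 1) * Nat.card F ^ finrank F A ≠ 0 :=
    mul_ne_zero (by omega) (pow_ne_zero _ (by omega))
  exact_mod_cast mul_right_cancel₀ hne hfactor

end Pencil

section Counting

variable {F : Type*} [Field F] {n : ℕ} {K : Set (PGPoint F n)} {P Q : PGPoint F n}
  {A B L M W : Submodule F (Fin (n + 1) → F)}

theorem mem_ptsIn : P ∈ ptsIn W ↔ P.submodule ≤ W :=
  Iff.rfl

theorem mem_ptsIn_iff_rep_mem : P ∈ ptsIn W ↔ P.rep ∈ W := by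
  rw [mem_ptsIn, P.submodule_eq, Submodule.span_singleton_le_iff_mem]

theorem ptsIn_mono (h : A ≤ B) : ptsIn A ⊆ ptsIn B :=
  fun _ hP => le_trans hP h

theorem ptsIn_submodule (P : PGPoint F n) : ptsIn P.submodule = {P} := by
  ext Q
  refine ⟨fun hQ => submodule_injective ?_, fun hQ => (congrArg Projectivization.submodule hQ).le⟩
  exact Submodule.eq_of_le_of_finrank_eq hQ (by rw [finrank_submodule, finrank_submodule])

theorem ptsIn_nonempty (h : 0 < finrank F W) : (ptsIn W).Nonempty := by
  have hW : W ≠ ⊥ := fun h0 => h.ne' (Submodule.finrank_eq_zero.2 h0)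
  obtain ⟨v, hvW, hv⟩ := Submodule.exists_mem_ne_zero_of_ne_bot hW
  exact ⟨mk F v hv, by rwa [mem_ptsIn, submodule_mk, Submodule.span_singleton_le_iff_mem]⟩

theorem finrank_submodule_sup_submodule_s15 (h : P ≠ Q) :
    finrank F ↥(P.submodule ⊔ Q.submodule) = 2 := by
  have hQ : Q.rep ∉ P.submodule := by
    rw [← mem_ptsIn_iff_rep_mem, ptsIn_submodule]
    exact h.symm
  rw [Q.submodule_eq, Submodule.finrank_sup_span_singleton hQ, finrank_submodule]

theorem eq_of_mem_ptsIn_of_ne (h : P ≠ Q) (hL : finrank F L = 2) (hM : finrank F M = 2)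
    (hPL : P ∈ ptsIn L) (hQL : Q ∈ ptsIn L) (hPM : P ∈ ptsIn M) (hQM : Q ∈ ptsIn M) : L = M := by
  have hPQ := finrank_submodule_sup_submodule_s15 h
  calc L = P.submodule ⊔ Q.submodule :=
        (Submodule.eq_of_le_of_finrank_eq (sup_le hPL hQL) (hPQ.trans hL.symm)).symm
    _ = M := Submodule.eq_of_le_of_finrank_eq (sup_le hPM hQM) (hPQ.trans hM.symm)

theorem exists_mem_ptsIn_inter_of_le_plane (hW : finrank F W = 3) (hL : finrank F L = 2)
    (hM : finrank F M = 2) (hLW : L ≤ W) (hMW : M ≤ W) : ∃ N, N ∈ ptsIn L ∧ N ∈ ptsIn M := by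
  have hdim := Submodule.finrank_sup_add_finrank_inf_eq L M
  have hsup := Submodule.finrank_mono (sup_le hLW hMW)
  obtain ⟨N, hN⟩ : (ptsIn (L ⊓ M)).Nonempty := ptsIn_nonempty (by omega)
  exact ⟨N, ptsIn_mono inf_le_left hN, ptsIn_mono inf_le_right hN⟩

theorem ncard_ptsIn_submodule_inter_of_mem (hP : P ∈ K) : (ptsIn P.submodule ∩ K).ncard = 1 := by
  rw [ptsIn_submodule, Set.singleton_inter_of_mem hP, Set.ncard_singleton]

theorem ncard_ptsIn_submodule_inter_of_notMem (hP : P ∉ K) :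
    (ptsIn P.submodule ∩ K).ncard = 0 := by
  rw [ptsIn_submodule, Set.singleton_inter_eq_empty.2 hP, Set.ncard_empty]

variable [Finite F]

theorem ncard_ptsIn_line (hL : finrank F L = 2) : (ptsIn L).ncard = Nat.card F + 1 := by
  have hrange : ptsIn L = Set.range (Projectivization.map L.subtype L.subtype_injective) := by
    ext P
    refine ⟨fun hP => ?_, ?_⟩
    · have hrep : P.rep ∈ L := mem_ptsIn_iff_rep_mem.1 hP
      exact ⟨mk F ⟨P.rep, hrep⟩ fun h => P.rep_nonzero (congrArg Subtype.val h), P.mk_rep⟩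
    · rintro ⟨R, rfl⟩
      induction R using Projectivization.ind with
      | h v hv =>
        rw [mem_ptsIn, map_mk, submodule_mk, Submodule.span_singleton_le_iff_mem]
        exact v.2
  rw [hrange, Set.ncard_range_of_injective (map_injective _ _), card_of_finrank_two F L hL]

theorem ncard_ptsIn_inter_mono (h : A ≤ B) : (ptsIn A ∩ K).ncard ≤ (ptsIn B ∩ K).ncard :=
  Set.ncard_le_ncard (Set.inter_subset_inter_left K (ptsIn_mono h))

theorem sum_ncard_ptsIn_inter_pencil (K : Set (PGPoint F n)) (hAB : A ≤ B)
    (hrank : finrank F B = finrank F A + 2) :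
    ∑ C ∈ pencil A B, (ptsIn C ∩ K).ncard =
      (ptsIn B ∩ K).ncard + Nat.card F * (ptsIn A ∩ K).ncard := by
  have hpts (W : Submodule F (Fin (n + 1) → F)) : K ∩ Projectivization.rep ⁻¹' W = ptsIn W ∩ K := by
    ext P
    simp [mem_ptsIn_iff_rep_mem, and_comm]
  have hcount := sum_ncard_inter_preimage_pencil hAB Projectivization.rep K
  simp only [hpts, card_pencil hAB hrank] at hcount
  linarith

end Counting

section Caps

variable {F : Type*} [Field F] {n : ℕ} {K : Set (PGPoint F n)} {P X : PGPoint F n}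
  {L M W : Submodule F (Fin (n + 1) → F)}

theorem IsTangent.exists_mem (hL : IsTangent K L) : ∃ P, P ∈ ptsIn L ∩ K :=
  Set.nonempty_of_ncard_ne_zero (hL.2 ▸ one_ne_zero)

theorem IsTangent.eq_of_mem (hL : IsTangent K L) (hP : P ∈ ptsIn L ∩ K) (hX : X ∈ ptsIn L ∩ K) :
    P = X := by
  obtain ⟨Y, hY⟩ := Set.ncard_eq_one.1 hL.2
  rw [hY] at hP hX
  exact hP.trans hX.symm

variable [Finite F]

theorem isCap_iff_ncard_ptsIn_inter_le_two :
    IsCap K ↔ ∀ L : Submodule F (Fin (n + 1) → F), finrank F L = 2 →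
      (ptsIn L ∩ K).ncard ≤ 2 := by
  refine ⟨fun hK L hL => ?_, fun hK P hP Q hQ R hR hPQ hPR hQR hcoll => ?_⟩
  · by_contra! hthree
    obtain ⟨P, Q, R, hP, hQ, hR, hPQ, hPR, hQR⟩ := (Set.two_lt_ncard_iff).1 hthree
    exact hK P hP.2 Q hQ.2 R hR.2 hPQ hPR hQR
      ((Submodule.finrank_mono (sup_le (sup_le hP.1 hQ.1) hR.1)).trans_eq hL)
  · set L := P.submodule ⊔ Q.submodule ⊔ R.submodule
    have hL : finrank F L = 2 := by
      refine le_antisymm hcoll ?_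
      rw [← finrank_submodule_sup_submodule_s15 hPQ]
      exact Submodule.finrank_mono le_sup_left
    have hPL : P.submodule ≤ L := le_sup_left.trans le_sup_left
    have hQL : Q.submodule ≤ L := le_sup_right.trans le_sup_left
    have hRL : R.submodule ≤ L := le_sup_right
    exact (hK L hL).not_gt ((Set.two_lt_ncard_iff).2
      ⟨P, Q, R, ⟨hPL, hP⟩, ⟨hQL, hQ⟩, ⟨hRL, hR⟩, hPQ, hPR, hQR⟩)

theorem IsCap.ncard_ptsIn_inter_le_two (hK : IsCap K) (hL : finrank F L = 2) :
    (ptsIn L ∩ K).ncard ≤ 2 :=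
  isCap_iff_ncard_ptsIn_inter_le_two.1 hK L hL

theorem IsCap.isCap_insert (hK : IsCap K)
    (hP : ∀ L : Submodule F (Fin (n + 1) → F), finrank F L = 2 → P ∈ ptsIn L →
      (ptsIn L ∩ K).ncard ≤ 1) :
    IsCap (insert P K) := by
  refine isCap_iff_ncard_ptsIn_inter_le_two.2 fun L hL => ?_
  by_cases hPL : P ∈ ptsIn L
  · rw [Set.inter_insert_of_mem hPL]
    exact (Set.ncard_insert_le _ _).trans (Nat.succ_le_succ (hP L hL hPL))
  · rw [Set.inter_insert_of_notMem hPL]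
    exact hK.ncard_ptsIn_inter_le_two hL

theorem IsCap.exists_isCompleteCap (hK : IsCap K) : ∃ M, K ⊆ M ∧ IsCompleteCap M := by
  obtain ⟨M, hKM, hM⟩ := Finite.exists_le_maximal hK
  exact ⟨M, hKM, hM.prop, fun P hP hcap =>
    hP (hM.le_of_ge hcap (Set.subset_insert P M) (Set.mem_insert P M))⟩

/-- The tangent lines of `K` through the point `P` that lie in the subspace `W`. -/
noncomputable def tangentsAt (K : Set (PGPoint F n)) (P : PGPoint F n)
    (W : Submodule F (Fin (n + 1) → F)) : Finset (Submodule F (Fin (n + 1) → F)) :=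
  {L ∈ pencil P.submodule W | (ptsIn L ∩ K).ncard = 1}

theorem mem_tangentsAt : L ∈ tangentsAt K P W ↔ IsTangent K L ∧ P ∈ ptsIn L ∧ L ≤ W := by
  rw [tangentsAt, Finset.mem_filter, mem_pencil, finrank_submodule, mem_ptsIn, IsTangent]
  tauto

theorem finrank_of_mem_pencil_submodule (hL : L ∈ pencil P.submodule W) : finrank F L = 2 := by
  rw [(mem_pencil.1 hL).2.2, finrank_submodule]

theorem sum_ncard_ptsIn_inter_pencil_submodule (K : Set (PGPoint F n)) (hW : finrank F W = 3)
    (hP : P ∈ ptsIn W) :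
    ∑ L ∈ pencil P.submodule W, (ptsIn L ∩ K).ncard =
      (ptsIn W ∩ K).ncard + Nat.card F * (ptsIn P.submodule ∩ K).ncard :=
  sum_ncard_ptsIn_inter_pencil K hP (by rw [hW, finrank_submodule])

theorem IsCap.ncard_plane_add_card_tangentsAt (hK : IsCap K) (hW : finrank F W = 3)
    (hPK : P ∈ K) (hPW : P ∈ ptsIn W) :
    (ptsIn W ∩ K).ncard + (tangentsAt K P W).card = Nat.card F + 2 := by
  have hline : ∀ L ∈ pencil P.submodule W,
      (ptsIn L ∩ K).ncard + (if (ptsIn L ∩ K).ncard = 1 then 1 else 0) = 2 := by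
    intro L hL
    have hle := hK.ncard_ptsIn_inter_le_two (finrank_of_mem_pencil_submodule hL)
    have hge := ncard_ptsIn_inter_mono (K := K) (mem_pencil.1 hL).1
    rw [ncard_ptsIn_submodule_inter_of_mem hPK] at hge
    split_ifs <;> omega
  have hlines := Finset.sum_const_nat hline
  rw [Finset.sum_add_distrib, ← Finset.card_filter, ← tangentsAt,
    sum_ncard_ptsIn_inter_pencil_submodule K hW hPW, ncard_ptsIn_submodule_inter_of_mem hPK,
    card_pencil hPW (by rw [hW, finrank_submodule])] at hlines
  linarith

theorem IsCap.ncard_plane_le_of_isTangent (hK : IsCap K) (hW : finrank F W = 3) (hLW : L ≤ W)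
    (hL : IsTangent K L) : (ptsIn W ∩ K).ncard ≤ Nat.card F + 1 := by
  obtain ⟨P, hPL, hPK⟩ := hL.exists_mem
  have hcount := hK.ncard_plane_add_card_tangentsAt hW hPK (ptsIn_mono hLW hPL)
  have hpos : 0 < (tangentsAt K P W).card :=
    Finset.card_pos.2 ⟨L, mem_tangentsAt.2 ⟨hL, hPL, hLW⟩⟩
  omega

-- Every line through `X` meets `K` in at most two points, and an odd number of them meet it oddly.
theorem IsCap.tangentsAt_nonempty (hK : IsCap K) (hq : Even (Nat.card F)) (hW : finrank F W = 3)
    (hodd : Odd (ptsIn W ∩ K).ncard) (hX : X ∈ ptsIn W) : (tangentsAt K X W).Nonempty := by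
  have hsum : Odd (∑ L ∈ pencil X.submodule W, (ptsIn L ∩ K).ncard) := by
    rw [sum_ncard_ptsIn_inter_pencil_submodule K hW hX]
    exact hodd.add_even (hq.mul_right _)
  obtain ⟨L, hL⟩ := Finset.card_pos.1 (Finset.odd_sum_iff_odd_card_odd _ |>.1 hsum).pos
  obtain ⟨hLX, hLodd⟩ := Finset.mem_filter.1 hL
  have hle := hK.ncard_ptsIn_inter_le_two (finrank_of_mem_pencil_submodule hLX)
  refine ⟨L, Finset.mem_filter.2 ⟨hLX, ?_⟩⟩
  obtain ⟨k, hk⟩ := hLodd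
  omega

theorem IsCap.ncard_tangents_le (hK : IsCap K) (hW : finrank F W = 3)
    (hcard : (ptsIn W ∩ K).ncard = Nat.card F + 1) :
    {L | IsTangent K L ∧ L ≤ W}.ncard ≤ Nat.card F + 1 := by
  choose! contact hcontact using fun L (hL : IsTangent K L ∧ L ≤ W) => hL.1.exists_mem
  rw [← hcard]
  refine Set.ncard_le_ncard_of_injOn contact
    (fun L hL => ⟨ptsIn_mono hL.2 (hcontact L hL).1, (hcontact L hL).2⟩) fun L hL M hM heq => ?_
  have hL' := hcontact L hL
  have hM' := hcontact M hM
  rw [← heq] at hM'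
  have hcount := hK.ncard_plane_add_card_tangentsAt hW hL'.2 (ptsIn_mono hL.2 hL'.1)
  exact Finset.card_le_one.1 (by omega : (tangentsAt K (contact L) W).card ≤ 1)
    L (mem_tangentsAt.2 ⟨hL.1, hL'.1, hL.2⟩) M (mem_tangentsAt.2 ⟨hM.1, hM'.1, hM.2⟩)

-- The `q + 1` points of `L` lie on distinct tangents, and `W` contains at most `q + 1` tangents.
theorem IsCap.card_tangentsAt_le_one (hK : IsCap K) (hq : Even (Nat.card F))
    (hW : finrank F W = 3) (hcard : (ptsIn W ∩ K).ncard = Nat.card F + 1)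
    (hL : finrank F L = 2) (hLW : L ≤ W) (hLK : ¬ IsTangent K L) (hX : X ∈ ptsIn L) :
    (tangentsAt K X W).card ≤ 1 := by
  have htangent (Y : ptsIn L) : (tangentsAt K Y W).Nonempty :=
    hK.tangentsAt_nonempty hq hW (hcard ▸ hq.add_one) (ptsIn_mono hLW Y.2)
  choose t ht using fun Y => (htangent Y).imp fun _ => mem_tangentsAt.1
  have hmeet {Y Z : ptsIn L} {M} (hM : IsTangent K M) (hY : Y.1 ∈ ptsIn M) (hZ : Z.1 ∈ ptsIn M) :
      Y = Z := by
    by_contra hne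
    have hML := eq_of_mem_ptsIn_of_ne (Subtype.coe_ne_coe.2 hne) hM.1 hL hY hZ Y.2 Z.2
    exact hLK (hML ▸ hM)
  let T : ptsIn L → {M | IsTangent K M ∧ M ≤ W} := fun Y => ⟨t Y, (ht Y).1, (ht Y).2.2⟩
  have hinj : Function.Injective T := fun Y Z hYZ => by
    have htYZ : t Y = t Z := congrArg Subtype.val hYZ
    exact hmeet (ht Y).1 (ht Y).2.1 (htYZ ▸ (ht Z).2.1)
  have hsurj : Function.Surjective T := by
    refine (hinj.bijective_of_nat_card_le ?_).surjective
    simpa only [Nat.card_coe_set_eq, ncard_ptsIn_line hL] using hK.ncard_tangents_le hW hcard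
  have huniq : ∀ M ∈ tangentsAt K X W, M = t ⟨X, hX⟩ := by
    intro M hM
    obtain ⟨hMK, hXM, hMW⟩ := mem_tangentsAt.1 hM
    obtain ⟨Y, hY⟩ := hsurj ⟨M, hMK, hMW⟩
    obtain rfl : t Y = M := congrArg Subtype.val hY
    rw [hmeet (Z := ⟨X, hX⟩) hMK (ht Y).2.1 hXM]
  exact Finset.card_le_one.2 fun M hM N hN => (huniq M hM).trans (huniq N hN).symm

/-- `N` is the nucleus of the plane section `W ∩ K`: it lies in the plane `W`, and every line of
`W` through `N` is tangent to `K`. -/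
def IsNucleus (K : Set (PGPoint F n)) (W : Submodule F (Fin (n + 1) → F)) (N : PGPoint F n) :
    Prop :=
  N ∈ ptsIn W ∧ ∀ L ≤ W, finrank F L = 2 → N ∈ ptsIn L → IsTangent K L

theorem IsCap.exists_isNucleus (hK : IsCap K) (hq : Even (Nat.card F)) (hW : finrank F W = 3)
    (hcard : (ptsIn W ∩ K).ncard = Nat.card F + 1) : ∃ N ∉ K, IsNucleus K W N := by
  have hodd : Odd (ptsIn W ∩ K).ncard := hcard ▸ hq.add_one
  have hpos : 0 < Nat.card F := Nat.card_pos
  obtain ⟨P, Q, hP, hQ, hPQ⟩ := (Set.one_lt_ncard_iff).1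
    (by omega : 1 < (ptsIn W ∩ K).ncard)
  obtain ⟨L, hL⟩ := hK.tangentsAt_nonempty hq hW hodd hP.1
  obtain ⟨M, hM⟩ := hK.tangentsAt_nonempty hq hW hodd hQ.1
  obtain ⟨hLK, hPL, hLW⟩ := mem_tangentsAt.1 hL
  obtain ⟨hMK, hQM, hMW⟩ := mem_tangentsAt.1 hM
  obtain ⟨N, hNL, hNM⟩ := exists_mem_ptsIn_inter_of_le_plane hW hLK.1 hMK.1 hLW hMW
  have hNK : N ∉ K := fun hNK =>
    hPQ ((hLK.eq_of_mem ⟨hPL, hP.2⟩ ⟨hNL, hNK⟩).trans (hMK.eq_of_mem ⟨hNM, hNK⟩ ⟨hQM, hQ.2⟩))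
  refine ⟨N, hNK, ptsIn_mono hLW hNL, fun S hSW hS hNS => ?_⟩
  by_contra hSK
  have hLM : L = M := Finset.card_le_one.1 (hK.card_tangentsAt_le_one hq hW hcard hS hSW hSK hNS)
    L (mem_tangentsAt.2 ⟨hLK, hNL, hLW⟩) M (mem_tangentsAt.2 ⟨hMK, hNM, hMW⟩)
  exact hPQ (hMK.eq_of_mem ⟨hLM ▸ hPL, hP.2⟩ ⟨hQM, hQ.2⟩)

theorem IsCap.ncard_plane_of_forall_not_isTangent (hK : IsCap K) (hno : ∀ L, ¬ IsTangent K L)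
    (hW : finrank F W = 3) (hWK : (ptsIn W ∩ K).Nonempty) :
    (ptsIn W ∩ K).ncard = Nat.card F + 2 := by
  obtain ⟨P, hPW, hPK⟩ := hWK
  have hnone : tangentsAt K P W = ∅ :=
    Finset.eq_empty_of_forall_notMem fun L hL => hno L (mem_tangentsAt.1 hL).1
  simpa [hnone] using hK.ncard_plane_add_card_tangentsAt hW hPK hPW

theorem IsCap.ncard_line_of_forall_not_isTangent (hK : IsCap K) (hno : ∀ L, ¬ IsTangent K L)
    (hL : finrank F L = 2) (hLK : (ptsIn L ∩ K).Nonempty) : (ptsIn L ∩ K).ncard = 2 := by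
  have hle := hK.ncard_ptsIn_inter_le_two hL
  have hpos := (Set.ncard_pos).2 hLK
  have hne : (ptsIn L ∩ K).ncard ≠ 1 := fun h => hno L ⟨hL, h⟩
  omega

-- If all `q + 1` lines of `W` through a point of `M` off `K` were secants, `W` would contain
-- `2 (q + 1) > q + 2` points of `K`.
theorem IsCap.exists_external_line (hK : IsCap K) (hno : ∀ L, ¬ IsTangent K L)
    (hq : 2 < Nat.card F) (hW : finrank F W = 3) (hM : finrank F M = 2) (hMW : M ≤ W) :
    ∃ L : Submodule F (Fin (n + 1) → F), finrank F L = 2 ∧ ptsIn L ∩ K = ∅ := by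
  obtain ⟨X, hXM, hXK⟩ : ∃ X ∈ ptsIn M, X ∉ K := by
    by_contra! hMK
    have hle := hK.ncard_ptsIn_inter_le_two hM
    rw [Set.inter_eq_left.2 hMK, ncard_ptsIn_line hM] at hle
    omega
  have hXW := ptsIn_mono hMW hXM
  by_contra! hmeet
  have hlines : ∀ L ∈ pencil X.submodule W, (ptsIn L ∩ K).ncard = 2 := fun L hL =>
    have hL2 := finrank_of_mem_pencil_submodule hL
    hK.ncard_line_of_forall_not_isTangent hno hL2 (hmeet L hL2)
  have hsum := Finset.sum_const_nat hlines
  rw [sum_ncard_ptsIn_inter_pencil_submodule K hW hXW,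
    card_pencil hXW (by rw [hW, finrank_submodule]),
    ncard_ptsIn_submodule_inter_of_notMem hXK] at hsum
  have hWK := hK.ncard_plane_of_forall_not_isTangent hno hW
    (Set.nonempty_of_ncard_ne_zero (by omega))
  omega

end Caps

section Space

variable {F : Type*} [Field F] {K : Set (PGPoint F 3)} {N : PGPoint F 3}
  {L W : Submodule F (Fin 4 → F)}

theorem finrank_plane_inf_plane {D : Submodule F (Fin 4 → F)} (hW : finrank F W = 3)
    (hD : finrank F D = 3) (hWD : W ≠ D) : finrank F ↥(W ⊓ D) = 2 := by
  have hdim := Submodule.finrank_sup_add_finrank_inf_eq W D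
  have hsup : finrank F ↥(W ⊔ D) ≤ 4 := by simpa using Submodule.finrank_le (W ⊔ D)
  have hlt : W < W ⊔ D := left_lt_sup.2 fun h =>
    hWD (Submodule.eq_of_le_of_finrank_eq h (hD.trans hW.symm)).symm
  have := Submodule.finrank_lt_finrank_of_lt hlt
  omega

variable [Finite F]

theorem finrank_of_mem_pencil_line (hL : finrank F L = 2) (hW : W ∈ pencil L ⊤) :
    finrank F W = 3 := by
  rw [(mem_pencil.1 hW).2.2, hL]

theorem card_pencil_line (hL : finrank F L = 2) : (pencil L ⊤).card = Nat.card F + 1 :=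
  card_pencil le_top (by simp [hL])

theorem sum_ncard_ptsIn_inter_pencil_line (K : Set (PGPoint F 3)) (hL : finrank F L = 2) :
    ∑ W ∈ pencil L ⊤, (ptsIn W ∩ K).ncard = K.ncard + Nat.card F * (ptsIn L ∩ K).ncard := by
  have htop : ptsIn (⊤ : Submodule F (Fin 4 → F)) = Set.univ :=
    Set.eq_univ_of_forall fun _ => mem_ptsIn.2 le_top
  rw [sum_ncard_ptsIn_inter_pencil K le_top (by simp [hL]), htop, Set.univ_inter]

-- Counting along a secant gives `|K| = (q + 1) (q + 2) - 2 q`, whereas counting along an external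
-- line shows that `q + 2` divides `|K|`; hence `q + 2` divides `4`.
theorem IsCap.exists_isTangent (hK : IsCap K) (hq : 2 < Nat.card F) (hcard : 2 ≤ K.ncard) :
    ∃ L, IsTangent K L := by
  by_contra! hno
  obtain ⟨P, Q, hP, -, hPQ⟩ := (Set.one_lt_ncard_iff).1 hcard
  set M := P.submodule ⊔ Q.submodule
  have hM : finrank F M = 2 := finrank_submodule_sup_submodule_s15 hPQ
  have hPM : P.submodule ≤ M := le_sup_left
  have hMK : (ptsIn M ∩ K).ncard = 2 :=
    hK.ncard_line_of_forall_not_isTangent hno hM ⟨P, hPM, hP⟩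
  have hplanes : ∀ W ∈ pencil M ⊤, (ptsIn W ∩ K).ncard = Nat.card F + 2 := fun W hW =>
    hK.ncard_plane_of_forall_not_isTangent hno (finrank_of_mem_pencil_line hM hW)
      ⟨P, hPM.trans (mem_pencil.1 hW).1, hP⟩
  have hsecant := Finset.sum_const_nat hplanes
  rw [sum_ncard_ptsIn_inter_pencil_line K hM, card_pencil_line hM, hMK] at hsecant
  obtain ⟨W, hW⟩ : (pencil M ⊤).Nonempty := Finset.card_pos.1 (by rw [card_pencil_line hM]; omega)
  obtain ⟨L, hL, hLK⟩ := hK.exists_external_line hno hq (finrank_of_mem_pencil_line hM hW) hM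
    (mem_pencil.1 hW).1
  have hdvd : Nat.card F + 2 ∣ K.ncard := by
    have hsum := sum_ncard_ptsIn_inter_pencil_line K hL
    rw [hLK, Set.ncard_empty, mul_zero, add_zero] at hsum
    rw [← hsum]
    refine Finset.dvd_sum fun W hW => ?_
    rcases (ptsIn W ∩ K).eq_empty_or_nonempty with h | h
    · simp [h]
    · rw [hK.ncard_plane_of_forall_not_isTangent hno (finrank_of_mem_pencil_line hL hW) h]
  have hfour : Nat.card F + 2 ∣ 4 := by
    obtain ⟨c, hc⟩ := hdvd
    zify at hc hsecant ⊢
    exact ⟨c - Nat.card F + 1, by linear_combination hc - hsecant⟩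
  have hle := Nat.le_of_dvd (by norm_num) hfour
  omega

theorem IsCap.exists_plane_ncard_eq (hK : IsCap K) (hcard : Nat.card F ^ 2 + 2 ≤ K.ncard)
    (hL : IsTangent K L) :
    ∃ W : Submodule F (Fin 4 → F), finrank F W = 3 ∧ (ptsIn W ∩ K).ncard = Nat.card F + 1 := by
  have hsum := sum_ncard_ptsIn_inter_pencil_line K hL.1
  obtain ⟨W, hWL, hW⟩ : ∃ W ∈ pencil L ⊤, Nat.card F < (ptsIn W ∩ K).ncard := by
    refine Finset.exists_lt_of_sum_lt ?_
    rw [hsum, Finset.sum_const, card_pencil_line hL.1, hL.2, smul_eq_mul]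
    nlinarith
  have hWrank := finrank_of_mem_pencil_line hL.1 hWL
  have hle := hK.ncard_plane_le_of_isTangent hWrank (mem_pencil.1 hWL).1 hL
  exact ⟨W, hWrank, by omega⟩

-- A plane through a secant `L` on `N` meets `W` in a line on `N`, which is tangent, so it contains
-- at most `q + 1` points of `K`; summing over the planes through `L` bounds `|K|`.
theorem IsNucleus.ncard_line_le_one (hN : IsNucleus K W N) (hK : IsCap K)
    (hcard : Nat.card F ^ 2 + 2 ≤ K.ncard) (hW : finrank F W = 3) (hL : finrank F L = 2)
    (hNL : N ∈ ptsIn L) : (ptsIn L ∩ K).ncard ≤ 1 := by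
  by_contra! hsecant
  have hLK : (ptsIn L ∩ K).ncard = 2 := by
    have := hK.ncard_ptsIn_inter_le_two hL
    omega
  have hLW : ¬ L ≤ W := fun h => hsecant.ne' (hN.2 L h hL hNL).2
  have hplane : ∀ D ∈ pencil L ⊤, (ptsIn D ∩ K).ncard ≤ Nat.card F + 1 := by
    intro D hD
    have hLD := (mem_pencil.1 hD).1
    have hDrank := finrank_of_mem_pencil_line hL hD
    have hND : N ∈ ptsIn (W ⊓ D) := mem_ptsIn.2 (le_inf hN.1 (ptsIn_mono hLD hNL))
    have hline : finrank F ↥(W ⊓ D) = 2 :=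
      finrank_plane_inf_plane hW hDrank fun h => hLW (h ▸ hLD)
    exact hK.ncard_plane_le_of_isTangent hDrank inf_le_right
      (hN.2 _ inf_le_left hline hND)
  have hsum := Finset.sum_le_card_nsmul _ _ _ hplane
  rw [sum_ncard_ptsIn_inter_pencil_line K hL, card_pencil_line hL, hLK, smul_eq_mul] at hsum
  nlinarith

theorem IsCompleteCap.ncard_le (hK : IsCompleteCap K) (hq : Even (Nat.card F))
    (hq2 : 2 < Nat.card F) : K.ncard ≤ Nat.card F ^ 2 + 1 := by
  by_contra! hcard
  obtain ⟨L, hL⟩ := hK.1.exists_isTangent hq2 (by omega)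
  obtain ⟨W, hW, hWK⟩ := hK.1.exists_plane_ncard_eq hcard hL
  obtain ⟨N, hNK, hN⟩ := hK.1.exists_isNucleus hq hW hWK
  exact hK.2 N hNK (hK.1.isCap_insert fun M hM hNM => hN.ncard_line_le_one hK.1 hcard hW hM hNM)

theorem IsCap.ncard_le (hK : IsCap K) (hq : Even (Nat.card F)) (hq2 : 2 < Nat.card F) :
    K.ncard ≤ Nat.card F ^ 2 + 1 := by
  obtain ⟨M, hKM, hM⟩ := hK.exists_isCompleteCap
  exact (Set.ncard_le_ncard hKM).trans (hM.ncard_le hq hq2)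

end Space

section EllipticQuadric

variable {F V : Type*} [Field F] [AddCommGroup V] [Module F V]

-- If `a u + b v + c w = 0`, then `0 = Q (a u + b v) = a b * polar Q u v`.
theorem mul_eq_zero_of_smul_add_smul_add_smul_eq_zero {Q : QuadraticForm F V} {u v w : V}
    (hu : Q u = 0) (hv : Q v = 0) (hw : Q w = 0) (huv : QuadraticMap.polar Q u v ≠ 0) {a b c : F}
    (h : a • u + b • v + c • w = 0) : a * b = 0 := by
  have hsum : Q (a • u + b • v) = 0 := by
    rw [eq_neg_of_add_eq_zero_left h, QuadraticMap.map_neg, QuadraticMap.map_smul, hw, smul_zero]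
  rw [QuadraticMap.map_add Q, QuadraticMap.map_smul, QuadraticMap.map_smul, hu, hv,
    QuadraticMap.polar_smul_left, QuadraticMap.polar_smul_right] at hsum
  simpa [huv] using hsum

theorem ne_zero_of_polar_ne_zero {Q : QuadraticForm F V} {u v : V}
    (h : QuadraticMap.polar Q u v ≠ 0) : u ≠ 0 := by
  rintro rfl
  exact h (QuadraticMap.polar_zero_left Q v)

theorem linearIndependent_of_polar_ne_zero {Q : QuadraticForm F V} {u v w : V}
    (hu : Q u = 0) (hv : Q v = 0) (hw : Q w = 0) (huv : QuadraticMap.polar Q u v ≠ 0)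
    (huw : QuadraticMap.polar Q u w ≠ 0) (hvw : QuadraticMap.polar Q v w ≠ 0) :
    LinearIndependent F ![u, v, w] := by
  have hu0 := ne_zero_of_polar_ne_zero huv
  have hv0 := ne_zero_of_polar_ne_zero hvw
  have hw0 := ne_zero_of_polar_ne_zero (QuadraticMap.polar_comm Q v w ▸ hvw)
  rw [Fintype.linearIndependent_iff]
  intro g hg
  simp only [Fin.sum_univ_three, Matrix.cons_val] at hg
  have h01 : g 0 * g 1 = 0 := mul_eq_zero_of_smul_add_smul_add_smul_eq_zero hu hv hw huv hg
  have h02 : g 0 * g 2 = 0 :=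
    mul_eq_zero_of_smul_add_smul_add_smul_eq_zero hu hw hv huw (by rw [← hg]; abel)
  have h12 : g 1 * g 2 = 0 :=
    mul_eq_zero_of_smul_add_smul_add_smul_eq_zero hv hw hu hvw (by rw [← hg]; abel)
  have hzero : g 0 = 0 ∧ g 1 = 0 ∧ g 2 = 0 := by
    rcases mul_eq_zero.1 h01 with h | h <;> rcases mul_eq_zero.1 h02 with h' | h' <;>
      rcases mul_eq_zero.1 h12 with h'' | h'' <;> simp_all
  simpa [Fin.forall_fin_succ] using hzero

variable {ι : Type*} {n : ℕ} {Q : QuadraticForm F (Fin (n + 1) → F)} {v : ι → Fin (n + 1) → F}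

theorem isCap_range_mk_of_polar_ne_zero (hv : ∀ i, v i ≠ 0) (hQ : ∀ i, Q (v i) = 0)
    (hpolar : ∀ i j, i ≠ j → QuadraticMap.polar Q (v i) (v j) ≠ 0) :
    IsCap (Set.range fun i => mk F (v i) (hv i)) := by
  set point := fun i => mk F (v i) (hv i)
  rintro _ ⟨i, rfl⟩ _ ⟨j, rfl⟩ _ ⟨k, rfl⟩ hij hik hjk hcoll
  have hind : LinearIndependent F ![v i, v j, v k] :=
    linearIndependent_of_polar_ne_zero (hQ i) (hQ j) (hQ k)
      (hpolar i j (ne_of_apply_ne point hij)) (hpolar i k (ne_of_apply_ne point hik))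
      (hpolar j k (ne_of_apply_ne point hjk))
  have hspan : Submodule.span F (Set.range ![v i, v j, v k]) =
      (F ∙ v i) ⊔ (F ∙ v j) ⊔ (F ∙ v k) := by
    simp only [Matrix.range_cons, Matrix.range_empty, Set.union_empty, Submodule.span_union,
      sup_assoc]
  have hrank := finrank_span_eq_card hind
  rw [hspan, Fintype.card_fin] at hrank
  rw [Coll3, submodule_mk, submodule_mk, submodule_mk, hrank] at hcoll
  omega

theorem injective_mk_of_polar_ne_zero (hv : ∀ i, v i ≠ 0) (hQ : ∀ i, Q (v i) = 0)
    (hpolar : ∀ i j, i ≠ j → QuadraticMap.polar Q (v i) (v j) ≠ 0) :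
    Function.Injective fun i => mk F (v i) (hv i) := by
  intro i j hij
  by_contra hne
  obtain ⟨a, ha⟩ := (mk_eq_mk_iff' F _ _ (hv i) (hv j)).1 hij
  apply hpolar i j hne
  rw [← ha, QuadraticMap.polar_smul_left, QuadraticMap.polar_self, hQ, smul_zero, smul_zero]

/-- The quadratic form `x₀ x₃ - N (x₁, x₂)` on `F⁴`; its zeros form an elliptic quadric of
`PG(3, q)` when the binary form `N` is anisotropic. -/
def ellipticForm (N : QuadraticForm F (F × F)) : QuadraticForm F (Fin 4 → F) :=
  QuadraticMap.proj 0 3 - N.comp ((LinearMap.proj 1).prod (LinearMap.proj 2))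

/-- Coordinates for the points of the elliptic quadric of `ellipticForm N`: the affine points
`(1, x, y, N (x, y))` and, at `none`, the point `(0, 0, 0, 1)` at infinity. -/
def ellipticVec (N : QuadraticForm F (F × F)) : Option (F × F) → Fin 4 → F
  | none => ![0, 0, 0, 1]
  | some p => ![1, p.1, p.2, N p]

variable {N : QuadraticForm F (F × F)}

theorem ellipticForm_apply (N : QuadraticForm F (F × F)) (v : Fin 4 → F) :
    ellipticForm N v = v 0 * v 3 - N (v 1, v 2) :=
  rfl

theorem ellipticForm_ellipticVec (i : Option (F × F)) :
    ellipticForm N (ellipticVec N i) = 0 := by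
  have hzero : N (0, 0) = 0 := QuadraticMap.map_zero N
  cases i <;> simp [ellipticForm_apply, ellipticVec, hzero]

theorem ellipticVec_ne_zero (i : Option (F × F)) : ellipticVec N i ≠ 0 := by
  intro h
  cases i with
  | none => simpa [ellipticVec] using congrFun h 3
  | some p => simpa [ellipticVec] using congrFun h 0

theorem polar_ellipticVec_some (p r : F × F) :
    QuadraticMap.polar (ellipticForm N) (ellipticVec N (some p)) (ellipticVec N (some r)) =
      N (p - r) := by
  have hsub : N (p - r) = N p + N r - QuadraticMap.polar N p r := by
    rw [sub_eq_add_neg, QuadraticMap.map_add N, QuadraticMap.map_neg, QuadraticMap.polar_neg_right]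
    abel
  rw [hsub, QuadraticMap.polar, ellipticForm_ellipticVec, ellipticForm_ellipticVec,
    ellipticForm_apply, QuadraticMap.polar]
  simp only [ellipticVec, Pi.add_apply, Matrix.cons_val, ← Prod.mk_add_mk, Prod.mk.eta]
  ring

theorem polar_ellipticVec_none (p : F × F) :
    QuadraticMap.polar (ellipticForm N) (ellipticVec N none) (ellipticVec N (some p)) = 1 := by
  rw [QuadraticMap.polar, ellipticForm_ellipticVec, ellipticForm_ellipticVec, ellipticForm_apply]
  simp [ellipticVec]

theorem polar_ellipticVec_ne_zero (hN : N.Anisotropic) {i j : Option (F × F)} (hij : i ≠ j) :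
    QuadraticMap.polar (ellipticForm N) (ellipticVec N i) (ellipticVec N j) ≠ 0 := by
  rcases i with _ | p <;> rcases j with _ | r
  · exact absurd rfl hij
  · rw [polar_ellipticVec_none]
    exact one_ne_zero
  · rw [QuadraticMap.polar_comm, polar_ellipticVec_none]
    exact one_ne_zero
  · rw [polar_ellipticVec_some]
    exact fun h => hij (congrArg some (sub_eq_zero.1 (hN _ h)))

/-- The binary form `x² + x y - d y²`: the norm form of `F[t] / (t² + t - d)`. -/
def normForm (d : F) : QuadraticForm F (F × F) :=
  QuadraticMap.linMulLin (LinearMap.fst F F F) (LinearMap.fst F F F) +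
    QuadraticMap.linMulLin (LinearMap.fst F F F) (LinearMap.snd F F F) -
    d • QuadraticMap.linMulLin (LinearMap.snd F F F) (LinearMap.snd F F F)

theorem normForm_apply (d x y : F) : normForm d (x, y) = x * x + x * y - d * (y * y) :=
  rfl

theorem normForm_anisotropic {d : F} (hd : ∀ t : F, t ^ 2 + t ≠ d) : (normForm d).Anisotropic := by
  rintro ⟨x, y⟩ h
  rw [normForm_apply] at h
  have hy : y = 0 := by
    by_contra hy
    refine hd (x / y) ?_
    field_simp
    linear_combination h
  subst hy
  simpa using h

-- `t ↦ t² + t` takes the value `0` at both `0` and `-1`.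
theorem exists_forall_sq_add_self_ne (F : Type*) [Field F] [Finite F] :
    ∃ d : F, ∀ t : F, t ^ 2 + t ≠ d := by
  by_contra! hsurj
  have hinj : Function.Injective fun t : F => t ^ 2 + t := Finite.injective_iff_surjective.2 hsurj
  exact neg_ne_zero.2 one_ne_zero (hinj (by ring : (-1 : F) ^ 2 + -1 = 0 ^ 2 + 0))

theorem exists_isCap_ncard_eq (F : Type*) [Field F] [Finite F] :
    ∃ K : Set (PGPoint F 3), IsCap K ∧ K.ncard = Nat.card F ^ 2 + 1 := by
  obtain ⟨d, hd⟩ := exists_forall_sq_add_self_ne F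
  have hpolar (i j) (hij : i ≠ j) := polar_ellipticVec_ne_zero (normForm_anisotropic hd) hij
  refine ⟨_,
    isCap_range_mk_of_polar_ne_zero ellipticVec_ne_zero ellipticForm_ellipticVec hpolar, ?_⟩
  rw [Set.ncard_range_of_injective
    (injective_mk_of_polar_ne_zero ellipticVec_ne_zero ellipticForm_ellipticVec hpolar),
    Finite.card_option, Nat.card_prod, sq]

end EllipticQuadric

theorem stmt15 (F : Type*) [Field F] [Fintype F] (q : ℕ) (hcard : Fintype.card F = q)
    (hqeven : Even q) (hq : 2 < q) :
    (∀ K : Set (PGPoint F 3), IsCap K → K.ncard ≤ q ^ 2 + 1) ∧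
    (∃ K : Set (PGPoint F 3), IsCap K ∧ K.ncard = q ^ 2 + 1) := by
  subst hcard
  rw [← Nat.card_eq_fintype_card] at hqeven hq ⊢
  exact ⟨fun K hK => hK.ncard_le hqeven hq, exists_isCap_ncard_eq F⟩
end

section
/- For every n ≥ 3, the maximum value of k for which a k-cap exists in PG(n, 2) is 2ⁿ; that is, every k-cap in PG(n, 2) satisfies k ≤ 2ⁿ, and there exists a 2ⁿ-cap in PG(n, 2). -/
open Module

/-
A line through a point `P` of a cap `K` contains at most one further point of `K`, so projecting
from `P` embeds the rest of `K` into `PG(n - 1, q)`; hence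
`|K| ≤ 1 + (1 + q + ⋯ + q ^ (n - 1))`, which is `2 ^ n` for `q = 2`. Conversely, over `GF(2)` the
third point of the line through two points outside a hyperplane lies in that hyperplane, so the
`2 ^ n` points outside it form a cap.
-/

open scoped LinearAlgebra.Projectivization

section Points

variable {K V : Type*} [DivisionRing K] [AddCommGroup V] [Module K V]

theorem submodule_le_iff_rep_mem {P : ℙ K V} {W : Submodule K V} :
    P.submodule ≤ W ↔ P.rep ∈ W := by
  rw [P.submodule_eq, Submodule.span_singleton_le_iff_mem]

theorem rep_mem_submodule_iff_eq {P Q : ℙ K V} : Q.rep ∈ P.submodule ↔ Q = P := by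
  rw [P.submodule_eq, Submodule.mem_span_singleton,
    ← Projectivization.mk_eq_mk_iff' K Q.rep P.rep Q.rep_nonzero P.rep_nonzero,
    Q.mk_rep, P.mk_rep]

theorem rep_injective : Function.Injective (Projectivization.rep : ℙ K V → V) :=
  fun _ _ h ↦ rep_mem_submodule_iff_eq.1 (h ▸ rep_mem_submodule_iff_eq.2 rfl)

theorem finrank_sup_submodule_of_ne [Module.Finite K V] {P Q : ℙ K V} (h : P ≠ Q) :
    finrank K ↥(P.submodule ⊔ Q.submodule) = 2 := by
  have hQ : Q.rep ∉ P.submodule := mt rep_mem_submodule_iff_eq.1 h.symm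
  rw [Q.submodule_eq, Submodule.finrank_sup_span_singleton hQ, P.finrank_submodule]

/-- The projection of projective space from the point `P`, used to count the lines through `P`:
these are encoded as the points of the projectivization of the quotient by `P`. -/
noncomputable def projFrom (P : ℙ K V) (Q : {Q : ℙ K V // Q ≠ P}) : ℙ K (V ⧸ P.submodule) :=
  .mk K (P.submodule.mkQ Q.1.rep) fun h ↦
    Q.2 (rep_mem_submodule_iff_eq.1 ((Submodule.Quotient.mk_eq_zero _).1 h))

theorem submodule_le_sup_of_projFrom_eq {P : ℙ K V} {Q R : {Q : ℙ K V // Q ≠ P}}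
    (h : projFrom P Q = projFrom P R) : R.1.submodule ≤ P.submodule ⊔ Q.1.submodule := by
  obtain ⟨a, ha⟩ := (Projectivization.mk_eq_mk_iff' K _ _ _ _).1 h.symm
  have hsub : R.1.rep - a • Q.1.rep ∈ P.submodule := (Submodule.Quotient.eq _).1 ha.symm
  have hsmul : a • Q.1.rep ∈ Q.1.submodule :=
    Submodule.smul_mem _ a (rep_mem_submodule_iff_eq.2 rfl)
  rw [submodule_le_iff_rep_mem, ← sub_add_cancel R.1.rep (a • Q.1.rep)]
  exact Submodule.add_mem_sup hsub hsmul

end Points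

section CapBound

variable {F : Type*} [Field F] {n : ℕ}

theorem coll3_iff_submodule_le_sup_s17 {P Q R : PGPoint F n} (h : P ≠ Q) :
    Coll3 P Q R ↔ R.submodule ≤ P.submodule ⊔ Q.submodule := by
  rw [Coll3, ← finrank_sup_submodule_of_ne h, ← sup_eq_left (a := P.submodule ⊔ Q.submodule)]
  exact ⟨fun hcoll ↦ (Submodule.eq_of_le_of_finrank_le le_sup_left hcoll).symm,
    fun hR ↦ (congrArg (fun W : Submodule F _ ↦ finrank F W) hR).le⟩

theorem finrank_quotient_submodule (P : PGPoint F n) :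
    finrank F ((Fin (n + 1) → F) ⧸ P.submodule) = n := by
  rw [Submodule.finrank_quotient, finrank_fin_fun, P.finrank_submodule, Nat.add_sub_cancel]

theorem IsCap.injOn_projFrom {K : Set (PGPoint F n)} (hK : IsCap K) {P : PGPoint F n}
    (hP : P ∈ K) : Set.InjOn (projFrom P) {Q | Q.1 ∈ K} := by
  intro Q hQ R hR h
  by_contra hQR
  exact hK P hP Q hQ R hR Q.2.symm R.2.symm (Subtype.coe_ne_coe.2 hQR) <|
    (coll3_iff_submodule_le_sup_s17 Q.2.symm).2 (submodule_le_sup_of_projFrom_eq h)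

theorem IsCap.ncard_le_s17 [Finite F] {K : Set (PGPoint F n)} (hK : IsCap K) :
    K.ncard ≤ ∑ i ∈ Finset.range n, Nat.card F ^ i + 1 := by
  rcases K.eq_empty_or_nonempty with rfl | ⟨P, hP⟩
  · simp
  have : Finite ((Fin (n + 1) → F) ⧸ P.submodule) := Module.finite_of_finite F
  have himage : Subtype.val '' {Q : {Q // Q ≠ P} | Q.1 ∈ K} = K \ {P} := by
    ext Q
    simp [and_comm]
  calc K.ncard = (K \ {P}).ncard + 1 := (Set.ncard_sdiff_singleton_add_one hP).symm
    _ = {Q : {Q // Q ≠ P} | Q.1 ∈ K}.ncard + 1 := by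
      rw [← himage, Set.ncard_image_of_injective _ Subtype.val_injective]
    _ = (projFrom P '' {Q | Q.1 ∈ K}).ncard + 1 := by
      rw [(hK.injOn_projFrom hP).ncard_image]
    _ ≤ Nat.card (ℙ F ((Fin (n + 1) → F) ⧸ P.submodule)) + 1 := by
      gcongr
      exact Set.ncard_le_card _
    _ = ∑ i ∈ Finset.range n, Nat.card F ^ i + 1 := by
      rw [Projectivization.card_of_finrank F _ (finrank_quotient_submodule P)]

end CapBound

section HyperplaneComplement

variable {F : Type*} [Field F] {n : ℕ}

theorem ptsIn_eq_range_map (W : Submodule F (Fin (n + 1) → F)) :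
    ptsIn W = Set.range (Projectivization.map W.subtype W.subtype_injective) := by
  ext P
  constructor
  · intro hP
    refine ⟨.mk F ⟨P.rep, submodule_le_iff_rep_mem.1 hP⟩ ?_, ?_⟩
    · exact fun h ↦ P.rep_nonzero (congrArg Subtype.val h)
    · rw [Projectivization.map_mk]
      exact P.mk_rep
  · rintro ⟨Q, rfl⟩
    induction Q using Projectivization.ind with
    | h v hv =>
      rw [Projectivization.map_mk]
      change (Projectivization.mk F _ _).submodule ≤ W
      rw [Projectivization.submodule_mk, Submodule.span_singleton_le_iff_mem]
      exact v.2

theorem ncard_ptsIn [Finite F] (W : Submodule F (Fin (n + 1) → F)) :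
    (ptsIn W).ncard = ∑ i ∈ Finset.range (finrank F W), Nat.card F ^ i := by
  rw [ptsIn_eq_range_map, Set.ncard_range_of_injective (Projectivization.map_injective _ _),
    Projectivization.card_of_finrank F W rfl]

theorem ncard_compl_ptsIn_of_finrank_eq [Finite F] {W : Submodule F (Fin (n + 1) → F)}
    (hW : finrank F W = n) : (ptsIn W)ᶜ.ncard = Nat.card F ^ n := by
  have htotal := Set.ncard_add_ncard_compl (ptsIn W)
  rw [ncard_ptsIn, hW, Projectivization.card_of_finrank F _ (finrank_fin_fun F),
    Finset.sum_range_succ] at htotal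
  exact Nat.add_left_cancel htotal

theorem finrank_ker_proj (i : Fin (n + 1)) :
    finrank F (LinearMap.proj i : (Fin (n + 1) → F) →ₗ[F] F).ker = n := by
  have hne : (LinearMap.proj i : (Fin (n + 1) → F) →ₗ[F] F) ≠ 0 :=
    fun h ↦ one_ne_zero (α := F) (by simpa using LinearMap.congr_fun h 1)
  exact Nat.succ_injective
    ((Module.Dual.finrank_ker_add_one_of_ne_zero hne).trans (finrank_fin_fun F))

end HyperplaneComplement

section OrderTwo

theorem eq_zero_or_eq_one_of_card_eq_two {R : Type*} [MulZeroOneClass R] [Nontrivial R]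
    (hR : Nat.card R = 2) (a : R) : a = 0 ∨ a = 1 :=
  or_iff_not_imp_left.2 fun ha ↦ ((Nat.card_eq_two_iff' 0).1 hR).unique ha one_ne_zero

variable {K V : Type*} [DivisionRing K] [AddCommGroup V] [Module K V]

theorem eq_or_eq_or_rep_eq_add_of_submodule_le_sup (hK : Nat.card K = 2) {P Q R : ℙ K V}
    (h : R.submodule ≤ P.submodule ⊔ Q.submodule) :
    R = P ∨ R = Q ∨ R.rep = P.rep + Q.rep := by
  obtain ⟨a, b, hab⟩ : ∃ a b : K, a • P.rep + b • Q.rep = R.rep := by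
    rwa [submodule_le_iff_rep_mem, P.submodule_eq, Q.submodule_eq, ← Submodule.span_insert,
      Submodule.mem_span_pair] at h
  rcases eq_zero_or_eq_one_of_card_eq_two hK a with rfl | rfl <;>
    rcases eq_zero_or_eq_one_of_card_eq_two hK b with rfl | rfl <;>
    simp only [zero_smul, one_smul, zero_add, add_zero] at hab
  · exact absurd hab.symm R.rep_nonzero
  · exact .inr (.inl (rep_injective hab.symm))
  · exact .inl (rep_injective hab.symm)
  · exact .inr (.inr hab.symm)

theorem add_mem_of_notMem_of_finrank_quotient_eq_one (hK : Nat.card K = 2) {W : Submodule K V}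
    (hW : finrank K (V ⧸ W) = 1) {v w : V} (hv : v ∉ W) (hw : w ∉ W) : v + w ∈ W := by
  have : Finite K := Nat.finite_of_card_ne_zero (hK ▸ two_ne_zero)
  have : Module.Finite K (V ⧸ W) := Module.finite_of_finrank_eq_succ hW
  have hindex : W.toAddSubgroup.index = 2 :=
    (Module.natCard_eq_pow_finrank (K := K) (V := V ⧸ W)).trans (by rw [hW, hK, pow_one])
  exact (AddSubgroup.add_mem_iff_of_index_two hindex).2 (iff_of_false hv hw)

theorem isCap_compl_ptsIn_of_finrank_eq {F : Type*} [Field F] (hF : Nat.card F = 2) {n : ℕ}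
    {W : Submodule F (Fin (n + 1) → F)} (hW : finrank F W = n) : IsCap (ptsIn W)ᶜ := by
  intro P hP Q hQ R hR hPQ hPR hQR hcoll
  have hquot : finrank F ((Fin (n + 1) → F) ⧸ W) = 1 := by
    rw [Submodule.finrank_quotient, finrank_fin_fun, hW, Nat.add_sub_cancel_left]
  have hadd : P.rep + Q.rep ∈ W := add_mem_of_notMem_of_finrank_quotient_eq_one hF hquot
    (mt submodule_le_iff_rep_mem.2 hP) (mt submodule_le_iff_rep_mem.2 hQ)
  rcases eq_or_eq_or_rep_eq_add_of_submodule_le_sup hF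
    ((coll3_iff_submodule_le_sup_s17 hPQ).1 hcoll) with h | h | h
  · exact hPR h.symm
  · exact hQR h.symm
  · exact hR (submodule_le_iff_rep_mem.2 (h ▸ hadd))

end OrderTwo

theorem stmt17_general (F : Type*) [Field F] (hF : Nat.card F = 2) (n : ℕ) :
    (∀ K : Set (PGPoint F n), IsCap K → K.ncard ≤ 2 ^ n) ∧
    (∃ K : Set (PGPoint F n), IsCap K ∧ K.ncard = 2 ^ n) := by
  have : Finite F := Nat.finite_of_card_ne_zero (hF ▸ two_ne_zero)
  constructor
  · intro K hK
    calc K.ncard ≤ ∑ i ∈ Finset.range n, 2 ^ i + 1 := hF ▸ hK.ncard_le_s17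
      _ = 2 ^ n := by simpa [one_add_one_eq_two] using geom_sum_mul_add (1 : ℕ) n
  · have hW := finrank_ker_proj (F := F) (0 : Fin (n + 1))
    exact ⟨_, isCap_compl_ptsIn_of_finrank_eq hF hW, hF ▸ ncard_compl_ptsIn_of_finrank_eq hW⟩

theorem stmt17 (F : Type*) [Field F] [Fintype F] (hcard : Fintype.card F = 2)
    (n : ℕ) (hn : 3 ≤ n) :
    (∀ K : Set (PGPoint F n), IsCap K → K.ncard ≤ 2 ^ n) ∧
    (∃ K : Set (PGPoint F n), IsCap K ∧ K.ncard = 2 ^ n) :=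
  stmt17_general F (Nat.card_eq_fintype_card.trans hcard) n
end
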